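/- arXiv:1111.7263 — 2 statements merged into one kernel-verified Lean document; each statement's English description precedes it below -/
import Mathlib

section
/- Let k be a field of characteristic 0 and let t, m, n satisfy 2 ≤ t, t+1 ≤ m ≤ n, and t+2 ≤ n. Then J_t(m,n) has a minimal generator of degree 3: the degree-3 homogeneous component of J_t(m,n) is not contained in the ideal of S_t(m,n) generated by the elements of J_t(m,n) of degree 2. -/
open MvPolynomial

/-- The `t`-minor `[I|J]` of the generic `m × n` matrix. -/
noncomputable def genericMinor (k : Type*) [CommRing k] (m n t : ℕ)
    (I : Finset (Fin m)) (J : Finset (Fin n)) (hI : I.card = t) (hJ : J.card = t) :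
    MvPolynomial (Fin m × Fin n) k :=
  Matrix.det (Matrix.of fun a b : Fin t =>
    MvPolynomial.X ((↑(I.orderIsoOfFin hI a) : Fin m), (↑(J.orderIsoOfFin hJ b) : Fin n)))

/-- Index set for the `t`-minors of an `m × n` matrix: pairs `(I, J)` of a `t`-element set
of rows and a `t`-element set of columns. -/
def MinorIndex (t m n : ℕ) : Type :=
  {p : Finset (Fin m) × Finset (Fin n) // p.1.card = t ∧ p.2.card = t}

/-- The presentation map `π : S_t(m,n) → R(m,n)`, sending the indeterminate `y_{I,J}`
to the `t`-minor `[I|J]`. -/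
noncomputable def minorPresentation (k : Type*) [CommRing k] (t m n : ℕ) :
    MvPolynomial (MinorIndex t m n) k →ₐ[k] MvPolynomial (Fin m × Fin n) k :=
  MvPolynomial.aeval fun p => genericMinor k m n t p.1.1 p.1.2 p.2.1 p.2.2

/-- `J_t(m,n)`: the ideal of relations of the `t`-minors of the generic `m × n` matrix. -/
noncomputable def minorRelations (k : Type*) [CommRing k] (t m n : ℕ) :
    Ideal (MvPolynomial (MinorIndex t m n) k) :=
  RingHom.ker (minorPresentation k t m n).toRingHom

/-- An ideal of a polynomial ring is generated in degrees `≤ D` if it is generated by its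
elements of total degree at most `D`. -/
def GeneratedInDegreesLE {k σ : Type*} [CommRing k]
    (I : Ideal (MvPolynomial σ k)) (D : ℕ) : Prop :=
  I = Ideal.span {x | x ∈ I ∧ x.totalDegree ≤ D}


theorem aux_vanish {F : Type*} [Field F] (u : ℕ) (A : Matrix (Fin (u+2)) (Fin u) F)
    (M : Fin 3 → Matrix (Fin (u+2)) (Fin (u+1)) F)
    (hM : ∀ j i b, M j i (Fin.castSucc b) = A i b) (ρ : Fin 3 → Fin (u+2)) :
    Matrix.det (Matrix.of fun i j : Fin 3 =>
      ((M j).submatrix (ρ i).succAbove id).det) = 0 := by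
  by_contra hdet
  have hrel : ∀ (j : Fin 3) (b : Fin u), ∑ i : Fin (u+2),
      (-1 : F) ^ (i : ℕ) * A i b * ((M j).submatrix i.succAbove id).det = 0 := by
    intro j b
    let N : Matrix (Fin (u+2)) (Fin (u+2)) F :=
      Matrix.of fun i => Fin.cons (A i b) (M j i)
    have hN : N.det = 0 := by
      apply Matrix.det_zero_of_column_eq (i := 0) (j := (Fin.castSucc b).succ)
        (Fin.succ_ne_zero _).symm
      intro i
      simp [N, hM]
    rw [Matrix.det_succ_column_zero] at hN
    rw [← hN]
    refine Finset.sum_congr rfl fun i _ => ?_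
    rfl
  let V : Matrix (Fin (u+2)) (Fin 3) F := Matrix.of fun i j =>
    (-1 : F) ^ (i : ℕ) * ((M j).submatrix i.succAbove id).det
  have hAV : A.transpose * V = 0 := by
    ext b j
    rw [Matrix.mul_apply, Matrix.zero_apply, ← hrel j b]
    refine Finset.sum_congr rfl fun i _ => ?_
    simp [V]; ring
  have hVinj : Function.Injective V.mulVecLin := by
    rw [← LinearMap.ker_eq_bot, LinearMap.ker_eq_bot']
    intro x hx
    by_contra hx0
    apply hdet
    rw [← Matrix.exists_mulVec_eq_zero_iff]
    refine ⟨x, hx0, ?_⟩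
    ext i
    have h1 := congrFun hx (ρ i)
    simp only [Matrix.mulVecLin_apply, Matrix.mulVec, dotProduct, V, Matrix.of_apply,
      Pi.zero_apply, mul_assoc] at h1 ⊢
    rw [← Finset.mul_sum] at h1
    exact (mul_eq_zero.mp h1).resolve_left (pow_ne_zero _ (by simp))
  have hle : LinearMap.range V.mulVecLin ≤ LinearMap.ker A.transpose.mulVecLin := by
    rintro _ ⟨x, rfl⟩
    rw [LinearMap.mem_ker, Matrix.mulVecLin_apply, Matrix.mulVecLin_apply,
      Matrix.mulVec_mulVec, hAV, Matrix.zero_mulVec]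
  have h3 : Module.finrank F (LinearMap.range V.mulVecLin) = 3 := by
    rw [LinearMap.finrank_range_of_inj hVinj]; simp
  have h4 := Submodule.finrank_mono hle
  have h5 := LinearMap.finrank_range_add_finrank_ker A.transpose.mulVecLin
  have h6 : A.transpose.rank = A.rank := Matrix.rank_transpose A
  have h7 := LinearMap.finrank_range_add_finrank_ker A.mulVecLin
  simp only [Module.finrank_fin_fun] at h5 h7
  unfold Matrix.rank at h6
  have h8 : 0 < Module.finrank F (LinearMap.ker A.mulVecLin) := by omega
  rw [Module.finrank_pos_iff_exists_ne_zero] at h8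
  obtain ⟨⟨x, hx⟩, hx0⟩ := h8
  have hx0' : x ≠ 0 := fun h => hx0 (by simpa using h)
  apply hdet
  have hz : ∀ i j, ((M j).submatrix (ρ i).succAbove id).det = 0 := by
    intro i j
    rw [← Matrix.exists_mulVec_eq_zero_iff]
    refine ⟨Fin.snoc x 0, ?_, ?_⟩
    · intro h
      apply hx0'
      ext b
      have := congrFun h (Fin.castSucc b)
      simpa using this
    · ext a
      have := congrFun (LinearMap.mem_ker.mp hx) ((ρ i).succAbove a)
      simp only [Matrix.mulVecLin_apply, Matrix.mulVec, dotProduct, Pi.zero_apply] at this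
      simp [Matrix.mulVec, dotProduct, Fin.sum_univ_castSucc, hM, this]
  have : (Matrix.of fun i j : Fin 3 => ((M j).submatrix (ρ i).succAbove id).det) = 0 := by
    ext i j; simp [hz]
  rw [this]; simp

theorem aux_minor (k : Type*) [CommRing k] (m n t : ℕ)
    (I : Finset (Fin m)) (J : Finset (Fin n)) (hI : I.card = t) (hJ : J.card = t)
    (f : Fin t → Fin m) (g : Fin t → Fin n) (hf : StrictMono f) (hg : StrictMono g)
    (hfI : ∀ a, f a ∈ I) (hgJ : ∀ a, g a ∈ J) :
    genericMinor k m n t I J hI hJ =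
      Matrix.det (Matrix.of fun a b : Fin t => X (f a, g b)) := by
  have h1 := Finset.orderEmbOfFin_unique hI hfI hf
  have h2 := Finset.orderEmbOfFin_unique hJ hgJ hg
  unfold genericMinor
  simp only [Finset.coe_orderIsoOfFin_apply]
  rw [h1, h2]

theorem aux_spec (k : Type*) [CommRing k] (t m n : ℕ) (τ : Fin m → Fin n) :
    ∃ c : MinorIndex t m n → k,
      (∀ a, aeval (fun p : Fin m × Fin n => if p.2 = τ p.1 then
          (X p.1 : MvPolynomial (Fin m) k) else 0) (genericMinor k m n t a.1.1 a.1.2 a.2.1 a.2.2)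
        = monomial (∑ i ∈ a.1.1, Finsupp.single i 1) (c a)) ∧
      (∀ a, a.1.2 = a.1.1.image τ → IsUnit (c a)) ∧
      (∀ a, a.1.2 ≠ a.1.1.image τ → c a = 0) := by
  classical
  refine ⟨fun a => Matrix.det (Matrix.of fun x y : Fin t =>
    if a.1.2.orderEmbOfFin a.2.2 y = τ (a.1.1.orderEmbOfFin a.2.1 x) then (1:k) else 0),
    ?_, ?_, ?_⟩
  · rintro ⟨⟨I, J⟩, hI, hJ⟩
    dsimp only at hI hJ ⊢
    unfold genericMinor
    rw [AlgHom.map_det]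
    have e1 : (aeval (fun p : Fin m × Fin n => if p.2 = τ p.1 then
          (X p.1 : MvPolynomial (Fin m) k) else 0)).mapMatrix (Matrix.of fun a b : Fin t =>
          (X (((I.orderIsoOfFin hI a : I) : Fin m), ((J.orderIsoOfFin hJ b : J) : Fin n)) :
            MvPolynomial (Fin m × Fin n) k))
        = Matrix.of fun x y => (X (I.orderEmbOfFin hI x) : MvPolynomial (Fin m) k) *
          (C.mapMatrix (Matrix.of fun x y : Fin t =>
            if J.orderEmbOfFin hJ y = τ (I.orderEmbOfFin hI x) then (1:k) else 0)) x y := by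
      ext1 x y
      simp only [AlgHom.mapMatrix_apply, Matrix.map_apply, Matrix.of_apply, aeval_X,
        Finset.coe_orderIsoOfFin_apply, RingHom.mapMatrix_apply]
      split_ifs <;> simp
    rw [e1, Matrix.det_mul_column, ← RingHom.map_det]
    have e2 : ∏ i : Fin t, (X (I.orderEmbOfFin hI i) : MvPolynomial (Fin m) k)
        = monomial (∑ i ∈ I, Finsupp.single i 1) 1 := by
      rw [monomial_sum_one]
      rw [← Finset.prod_coe_sort I, ← (I.orderIsoOfFin hI).toEquiv.prod_comp]
      rfl
    rw [e2, mul_comm, C_mul_monomial, mul_one]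
  · rintro ⟨⟨I, J⟩, hI, hJ⟩ h
    dsimp only at hI hJ h ⊢
    subst h
    have hinj : Set.InjOn τ I := Finset.injOn_of_card_image_eq (hJ.trans hI.symm)
    have hex : ∀ x : Fin t, ∃ y : Fin t,
        (I.image τ).orderEmbOfFin hJ y = τ (I.orderEmbOfFin hI x) := by
      intro x
      have : τ (I.orderEmbOfFin hI x) ∈ I.image τ :=
        Finset.mem_image_of_mem _ (Finset.orderEmbOfFin_mem _ _ _)
      rw [← Finset.mem_coe, ← Finset.range_orderEmbOfFin _ hJ] at this
      exact this
    choose e he using hex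
    have einj : Function.Injective e := by
      intro x y hxy
      have h1 := he x
      rw [hxy, he y] at h1
      exact ((I.orderEmbOfFin hI).injective (hinj (Finset.orderEmbOfFin_mem _ _ _)
        (Finset.orderEmbOfFin_mem _ _ _) h1)).symm
    let E : Equiv.Perm (Fin t) := Equiv.ofBijective e (Finite.injective_iff_bijective.mp einj)
    have : (Matrix.of fun x y : Fin t =>
        if (I.image τ).orderEmbOfFin hJ y = τ (I.orderEmbOfFin hI x) then (1:k) else 0)
        = (1 : Matrix (Fin t) (Fin t) k).submatrix E id := by
      ext x y
      simp only [Matrix.of_apply, ← he, Matrix.submatrix_apply, Matrix.one_apply,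
        EmbeddingLike.apply_eq_iff_eq, E, Equiv.ofBijective_apply, id, eq_comm]
    rw [this, Matrix.det_permute, Matrix.det_one, mul_one]
    exact (Equiv.Perm.sign E).isUnit.map (Int.castRingHom k)
  · rintro ⟨⟨I, J⟩, hI, hJ⟩ h
    dsimp only at hI hJ h ⊢
    have : ¬ J ⊆ I.image τ := fun hs => h (Finset.eq_of_subset_of_card_le hs
      (Finset.card_image_le.trans (by omega)))
    rw [Finset.not_subset] at this
    obtain ⟨y, hy, hyn⟩ := this
    rw [← Finset.mem_coe, ← Finset.range_orderEmbOfFin _ hJ] at hy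
    obtain ⟨y, rfl⟩ := hy
    apply Matrix.det_eq_zero_of_column_eq_zero y
    intro x
    rw [Matrix.of_apply, if_neg]
    intro h'
    exact hyn (h' ▸ Finset.mem_image_of_mem _ (Finset.orderEmbOfFin_mem _ _ _))

theorem aux_w_apply {m : ℕ} (I : Finset (Fin m)) (x : Fin m) :
    (∑ i ∈ I, Finsupp.single i 1 : Fin m →₀ ℕ) x = if x ∈ I then 1 else 0 := by
  classical
  simp [Finsupp.finsetSum_apply, Finsupp.single_apply]

theorem aux_pair {m : ℕ} (Ia Ib K : Finset (Fin m)) (p q : Fin m)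
    (hp : p ∉ K) (hq : q ∉ K) (hpq : p ≠ q) (ha : Ia.card = K.card + 1)
    (h : (∑ i ∈ Ia, Finsupp.single i 1 + ∑ i ∈ Ib, Finsupp.single i 1 : Fin m →₀ ℕ)
      = ∑ i ∈ insert q K, Finsupp.single i 1 + ∑ i ∈ insert p K, Finsupp.single i 1)
    (hpa : p ∉ Ia) : Ia = insert q K ∧ Ib = insert p K := by
  classical
  have hx : ∀ x, (if x ∈ Ia then 1 else 0) + (if x ∈ Ib then 1 else 0) =
      (if x ∈ insert q K then 1 else 0) + (if x ∈ insert p K then 1 else 0) := by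
    intro x
    have := DFunLike.congr_fun h x
    simpa only [Finsupp.add_apply, aux_w_apply] using this
  have h1 : Ia = insert q K := by
    apply Finset.eq_of_subset_of_card_le
    · intro x hxa
      have := hx x
      by_contra hn
      by_cases hxp : x = p
      · exact hpa (hxp ▸ hxa)
      · have : x ∉ insert p K := by
          simp only [Finset.mem_insert, not_or] at hn ⊢
          exact ⟨hxp, hn.2⟩
        simp_all
    · rw [Finset.card_insert_of_notMem hq, ha]
  refine ⟨h1, ?_⟩
  ext x
  have := hx x
  rw [h1] at this
  have h2 := Nat.add_left_cancel this
  split_ifs at h2 <;> simp_all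

theorem aux_coeff (k : Type*) [Field k] (t m n : ℕ) (a1 a2 : MinorIndex t m n)
    (K : Finset (Fin m)) (L : Finset (Fin n)) (p q : Fin m) (r s : Fin n)
    (hp : p ∉ K) (hq : q ∉ K) (hpq : p ≠ q)
    (hKL : K.card = L.card) (h1 : a1.1.1 = insert q K) (h2 : a2.1.1 = insert p K)
    (h3 : a1.1.2 = insert r L) (h4 : a2.1.2 = insert s L)
    (Q : MvPolynomial (MinorIndex t m n) k) (hQ : Q ∈ minorRelations k t m n)
    (hQ2 : Q.IsHomogeneous 2) :
    coeff (Finsupp.single a1 1 + Finsupp.single a2 1) Q = 0 := by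
  classical
  -- the column assignment
  obtain ⟨τ, hτ1, hτ2⟩ : ∃ τ : Fin m → Fin n,
      (insert q K).image τ = insert r L ∧ (insert p K).image τ = insert s L := by
    let e := Finset.equivOfCardEq hKL
    let τ : Fin m → Fin n := fun x => if h : x ∈ K then (e ⟨x, h⟩ : Fin n)
      else if x = p then s else r
    have hK : K.image τ = L := by
      ext y
      simp only [Finset.mem_image]
      constructor
      · rintro ⟨x, hx, rfl⟩
        simp only [τ, dif_pos hx]
        exact (e ⟨x, hx⟩).2
      · intro hy
        refine ⟨e.symm ⟨y, hy⟩, (e.symm ⟨y, hy⟩).2, ?_⟩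
        simp [τ]
    refine ⟨τ, ?_, ?_⟩
    · rw [Finset.image_insert, hK]; simp [τ, hq, hpq.symm]
    · rw [Finset.image_insert, hK]; simp [τ, hp]
  obtain ⟨c, hc, hcu, hc0⟩ := aux_spec k t m n τ
  let w : MinorIndex t m n → (Fin m →₀ ℕ) := fun a => ∑ i ∈ a.1.1, Finsupp.single i 1
  have hzero : aeval (fun a => (monomial (w a) (c a) : MvPolynomial (Fin m) k)) Q = 0 := by
    have hQ' : minorPresentation k t m n Q = 0 := hQ
    have := congrArg (aeval (fun p : Fin m × Fin n => if p.2 = τ p.1 then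
          (X p.1 : MvPolynomial (Fin m) k) else 0)) hQ'
    rw [map_zero, minorPresentation, ← AlgHom.comp_apply, comp_aeval] at this
    simp only [hc] at this
    exact this
  have hmon : ∀ x y (v : k), aeval (fun a => (monomial (w a) (c a) : MvPolynomial (Fin m) k))
      (monomial (Finsupp.single x 1 + Finsupp.single y 1) v) =
      monomial (w x + w y) (v * (c x * c y)) := by
    intro x y v
    rw [aeval_monomial, Finsupp.prod_add_index' (by simp) (by simp [pow_add]),
      Finsupp.prod_single_index (by simp), Finsupp.prod_single_index (by simp),
      pow_one, pow_one, monomial_mul, algebraMap_eq, C_mul_monomial]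
  have hcoef := congrArg (coeff (w a1 + w a2)) hzero
  rw [coeff_zero, Q.as_sum, map_sum, coeff_sum,
    Finset.sum_eq_single (Finsupp.single a1 1 + Finsupp.single a2 1)] at hcoef
  · rw [hmon, coeff_monomial, if_pos rfl] at hcoef
    have u1 := (hcu a1 (by rw [h1, h3, hτ1])).ne_zero
    have u2 := (hcu a2 (by rw [h2, h4, hτ2])).ne_zero
    exact (mul_eq_zero.mp hcoef).resolve_right (mul_ne_zero u1 u2)
  · intro d hd hne
    have hdeg : d.degree = 2 := by
      have := hQ2 (mem_support_iff.mp hd)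
      rwa [Finsupp.degree_eq_weight_one]
    obtain ⟨x, y, hxy⟩ : ∃ x y, d = Finsupp.single x 1 + Finsupp.single y 1 := by
      have : Multiset.card (Finsupp.toMultiset d) = 2 := by
        rw [Finsupp.card_toMultiset]; exact hdeg
      obtain ⟨x, y, h⟩ := Multiset.card_eq_two.mp this
      refine ⟨x, y, ?_⟩
      apply Multiset.toFinsupp.symm.injective; change Finsupp.toMultiset _ = Finsupp.toMultiset _
      rw [h, map_add, Finsupp.toMultiset_single, Finsupp.toMultiset_single]
      simp
    subst hxy
    rw [hmon, coeff_monomial]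
    split_ifs with hw
    · by_contra hn
      have hcx : c x ≠ 0 := fun h => hn (by simp [h])
      have hcy : c y ≠ 0 := fun h => hn (by simp [h])
      have hx2 := not_imp_comm.mp (hc0 x) hcx
      have hy2 := not_imp_comm.mp (hc0 y) hcy
      have hw' : w x + w y = ∑ i ∈ insert q K, Finsupp.single i 1 +
          ∑ i ∈ insert p K, Finsupp.single i 1 := by
        rw [hw, ← h1, ← h2]
      have hcard : K.card + 1 = t := by
        rw [← Finset.card_insert_of_notMem hq, ← h1, a1.2.1]
      have hfin : ∀ x y : MinorIndex t m n, x.1.2 = x.1.1.image τ → y.1.2 = y.1.1.image τ →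
          x.1.1 = insert q K ∧ y.1.1 = insert p K → x = a1 ∧ y = a2 := by
        rintro x y hx hy ⟨hxx, hyy⟩
        refine ⟨Subtype.ext (Prod.ext ?_ ?_), Subtype.ext (Prod.ext ?_ ?_)⟩
        · rw [hxx, h1]
        · rw [hx, hxx, hτ1, h3]
        · rw [hyy, h2]
        · rw [hy, hyy, hτ2, h4]
      by_cases hpx : p ∈ x.1.1
      · have hpy : p ∉ y.1.1 := by
          intro hpy
          have := DFunLike.congr_fun hw' p
          simp only [w, Finsupp.add_apply, aux_w_apply] at this
          simp [hpx, hpy, hp, hpq] at this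
        have := hfin y x hy2 hx2 (aux_pair _ _ K p q hp hq hpq (by rw [y.2.1, hcard])
          (by rw [← hw', add_comm]) hpy)
        apply hne
        rw [this.1, this.2, add_comm]
      · have := hfin x y hx2 hy2 (aux_pair _ _ K p q hp hq hpq (by rw [x.2.1, hcard])
          hw' hpx)
        apply hne
        rw [this.1, this.2]
    · rfl
  · intro hns
    rw [notMem_support_iff.mp hns]
    simp

theorem aux_notMem {k σ : Type*} [Field k] (P : Set (MvPolynomial σ k))
    (hP2 : ∀ q ∈ P, q.IsHomogeneous 2) (a : Fin 3 → Fin 3 → σ)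
    (ha : ∀ i j i' j', a i j = a i' j' → i = i' ∧ j = j')
    (hP : ∀ q ∈ P, ∀ i j : Fin 3, i ≠ j →
      coeff (Finsupp.single (a i i) 1 + Finsupp.single (a j j) 1) q = 0) :
    Matrix.det (Matrix.of fun i j => (X (a i j) : MvPolynomial σ k)) ∉ Ideal.span P := by
  classical
  set M : σ →₀ ℕ := ∑ i : Fin 3, Finsupp.single (a i i) 1 with hM
  have hMdeg : M.degree = 3 := by
    simp [hM, Fin.sum_univ_three]
  have hsplit : ∀ i : Fin 3, ∃ j l : Fin 3, j ≠ l ∧ M = Finsupp.single (a i i) 1 +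
      (Finsupp.single (a j j) 1 + Finsupp.single (a l l) 1) := by
    intro i
    rw [hM, Fin.sum_univ_three]
    fin_cases i
    · exact ⟨1, 2, by decide, by simp only [Fin.mk_zero, Fin.zero_eta]; abel⟩
    · exact ⟨0, 2, by decide, by simp only [Fin.mk_one]; abel⟩
    · exact ⟨0, 1, by decide, by simp only [Fin.reduceFinMk]; abel⟩
  have hkill : ∀ f ∈ Ideal.span P, ∀ g, coeff M (g * f) = 0 := by
    intro f hf
    refine Submodule.span_induction (p := fun f _ => ∀ g, coeff M (g * f) = 0) ?_ ?_ ?_ ?_ hf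
    · intro q hq g
      rw [coeff_mul]
      refine Finset.sum_eq_zero ?_
      rintro ⟨b1, b2⟩ hb
      rw [Finset.HasAntidiagonal.mem_antidiagonal] at hb
      dsimp only at hb ⊢
      by_contra hn
      have hq0 : coeff b2 q ≠ 0 := right_ne_zero_of_mul hn
      have hd2 : b2.degree = 2 := by
        have := hP2 q hq hq0
        rwa [Finsupp.degree_eq_weight_one]
      have hd1 : b1.degree = 1 := by
        have := congrArg Finsupp.degree hb
        rw [map_add, hMdeg, hd2] at this
        omega
      obtain ⟨s, hs⟩ : ∃ s, b1 = Finsupp.single s 1 := by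
        have : Multiset.card (Finsupp.toMultiset b1) = 1 := by
          rw [Finsupp.card_toMultiset]; exact hd1
        obtain ⟨s, h⟩ := Multiset.card_eq_one.mp this
        refine ⟨s, ?_⟩
        apply Multiset.toFinsupp.symm.injective; change Finsupp.toMultiset _ = Finsupp.toMultiset _
        rw [h, Finsupp.toMultiset_single]
        simp
      subst hs
      have hMs : M s ≠ 0 := by
        rw [← hb]; simp
      obtain ⟨i, hi⟩ : ∃ i, a i i = s := by
        by_contra hno
        push Not at hno
        apply hMs
        rw [hM, Finsupp.finsetSum_apply]
        exact Finset.sum_eq_zero fun i _ => by simp [Finsupp.single_apply, hno i]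
      obtain ⟨j, l, hjl, hsp⟩ := hsplit i
      rw [hsp, hi] at hb
      have := add_left_cancel hb
      rw [this] at hq0
      exact hq0 (hP q hq j l hjl)
    · simp
    · intro x y _ _ hx hy g
      rw [mul_add, coeff_add, hx, hy, add_zero]
    · intro r x _ hx g
      rw [smul_eq_mul, ← mul_assoc]
      exact hx _
  intro hmem
  have h0 := hkill _ hmem 1
  have hprod : ∀ τ : Equiv.Perm (Fin 3), ∏ i, (X (a (τ i) i) : MvPolynomial σ k) =
      monomial (∑ i, Finsupp.single (a (τ i) i) 1) 1 := by
    intro τ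
    rw [monomial_sum_one]
    rfl
  rw [one_mul, Matrix.det_apply, coeff_sum, Finset.sum_eq_single 1] at h0
  · simp only [Matrix.of_apply, hprod] at h0
    simp [← hM] at h0
  · intro τ _ hτ
    simp only [Matrix.of_apply, hprod]
    obtain ⟨i, hi⟩ : ∃ i, τ i ≠ i := by
      by_contra hno
      push Not at hno
      exact hτ (Equiv.ext hno)
    have hne : (∑ i, Finsupp.single (a (τ i) i) 1 : σ →₀ ℕ) ≠ M := by
      intro h
      have h1 := DFunLike.congr_fun h (a (τ i) i)
      have h2 : M (a (τ i) i) = 0 := by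
        rw [hM, Finsupp.finsetSum_apply]
        refine Finset.sum_eq_zero fun j _ => ?_
        rw [Finsupp.single_apply, if_neg]
        intro hj
        have := ha _ _ _ _ hj
        exact hi (this.1.symm.trans this.2)
      rw [h2, Finsupp.finsetSum_apply, Finset.sum_eq_zero_iff] at h1
      have := h1 i (Finset.mem_univ _)
      simp at this
    rw [Units.smul_def, zsmul_eq_mul, ← map_intCast (C : k →+* MvPolynomial σ k), coeff_C_mul,
      coeff_monomial, if_neg hne, mul_zero]
  · simp

/-- For `2 ≤ t`, `t + 1 ≤ m ≤ n` and `t + 2 ≤ n`, the ideal of relations of the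
`t`-minors has a minimal generator of degree 3: some homogeneous element of degree 3 of
`J_t(m,n)` does not lie in the ideal generated by the degree-2 homogeneous elements of
`J_t(m,n)`. -/
theorem minorRelations_has_cubic_minimal_generator (k : Type*) [Field k] [CharZero k]
    (t m n : ℕ) (ht : 2 ≤ t) (htm : t + 1 ≤ m) (hmn : m ≤ n) (hn : t + 2 ≤ n) :
    ∃ f : MvPolynomial (MinorIndex t m n) k,
      f ∈ minorRelations k t m n ∧ f.IsHomogeneous 3 ∧
      f ∉ Ideal.span {x | x ∈ minorRelations k t m n ∧ x.IsHomogeneous 2} := by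
  obtain ⟨u, rfl⟩ : ∃ u, t = u + 1 := ⟨t - 1, by omega⟩
  classical
  let ρ : Fin 3 → Fin (u+2) := fun i => ⟨u - 1 + i, by omega⟩
  have hρ : Function.Injective ρ := by
    intro i j h
    have := congrArg Fin.val h
    simp only [ρ] at this
    ext; omega
  let κ : Fin 3 → Fin n := fun j => ⟨u + j, by omega⟩
  have hκ : Function.Injective κ := by
    intro i j h
    have := congrArg Fin.val h
    simp only [κ] at this
    ext; omega
  let ι : Fin (u+2) ↪ Fin m := Fin.castLEEmb htm
  let D : Finset (Fin n) := Finset.univ.map (Fin.castLEEmb (show u ≤ n by omega))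
  have hD : D.card = u := by simp [D]
  have hκD : ∀ j, κ j ∉ D := by
    intro j hj
    simp only [D, Finset.mem_map, Finset.mem_univ, true_and] at hj
    obtain ⟨b, hb⟩ := hj
    have := congrArg Fin.val hb
    simp [κ] at this
    omega
  let I : Fin 3 → Finset (Fin m) := fun i => (Finset.univ.erase (ρ i)).map ι
  have hI : ∀ i, (I i).card = u + 1 := by intro i; simp [I]
  let J : Fin 3 → Finset (Fin n) := fun j => insert (κ j) D
  have hJ : ∀ j, (J j).card = u + 1 := by
    intro j; simp only [J]; rw [Finset.card_insert_of_notMem (hκD j), hD]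
  let a : Fin 3 → Fin 3 → MinorIndex (u+1) m n := fun i j => ⟨(I i, J j), hI i, hJ j⟩
  have hIinj : Function.Injective I := by
    intro i i' h
    by_contra hne
    have h1 : ι (ρ i) ∈ I i' := by
      simp only [I, Finset.mem_map', Finset.mem_erase, Finset.mem_univ, and_true]
      exact fun h => hne (hρ h)
    rw [← h] at h1
    simp [I] at h1
  have hJinj : Function.Injective J := by
    intro j j' h
    have h1 : κ j ∈ J j' := by rw [← h]; simp [J]
    simp only [J, Finset.mem_insert] at h1
    exact hκ (h1.resolve_right (hκD j))
  have ha : ∀ i j i' j', a i j = a i' j' → i = i' ∧ j = j' := by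
    intro i j i' j' h
    have h1 := congrArg Subtype.val h
    simp only [a, Prod.mk.injEq] at h1
    exact ⟨hIinj h1.1, hJinj h1.2⟩
  refine ⟨Matrix.det (Matrix.of fun i j => X (a i j)), ?_, ?_, ?_⟩
  · change minorPresentation k (u+1) m n _ = 0
    rw [AlgHom.map_det]
    apply IsFractionRing.injective (MvPolynomial (Fin m × Fin n) k)
      (FractionRing (MvPolynomial (Fin m × Fin n) k))
    rw [map_zero, RingHom.map_det]
    let g : Fin 3 → Fin (u+1) → Fin n := fun j b =>
      ⟨if (b : ℕ) < u then b else u + j, by split_ifs <;> omega⟩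
    have hg : ∀ j, StrictMono (g j) := by
      intro j b b' h
      simp only [g, Fin.lt_def] at h ⊢
      split_ifs <;> omega
    have hgJ : ∀ j b, g j b ∈ J j := by
      intro j b
      by_cases hb : (b : ℕ) < u
      · apply Finset.mem_insert_of_mem
        simp only [D, Finset.mem_map, Finset.mem_univ, true_and]
        refine ⟨⟨b, hb⟩, ?_⟩
        ext
        simp [g, hb]
      · simp only [J, Finset.mem_insert]
        left
        ext
        simp [g, κ, hb]
    have hmin : ∀ i j, genericMinor k m n (u+1) (I i) (J j) (hI i) (hJ j) =
        Matrix.det (Matrix.of fun x y : Fin (u+1) => X (ι ((ρ i).succAbove x), g j y)) := by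
      intro i j
      refine aux_minor k m n (u+1) (I i) (J j) (hI i) (hJ j)
        (fun x => ι ((ρ i).succAbove x)) (g j) ?_ (hg j) ?_ (hgJ j)
      · intro x y h
        exact (Fin.strictMono_castLE htm) (Fin.strictMono_succAbove (ρ i) h)
      · intro x
        simp [I, Fin.succAbove_ne]
    rw [← aux_vanish (F := FractionRing (MvPolynomial (Fin m × Fin n) k)) u
      (Matrix.of fun i b => algebraMap (MvPolynomial (Fin m × Fin n) k) _
        (X (ι i, Fin.castLE (show u ≤ n by omega) b)))
      (fun j => Matrix.of fun i b => algebraMap (MvPolynomial (Fin m × Fin n) k) _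
        (X (ι i, g j b))) ?_ ρ]
    · congr 1
      ext i j
      simp only [RingHom.mapMatrix_apply, AlgHom.mapMatrix_apply, Matrix.map_apply,
        Matrix.of_apply, minorPresentation, aeval_X]
      simp only [a]
      rw [hmin, RingHom.map_det]
      rfl
    · intro j i b
      simp only [Matrix.of_apply]
      congr 3
      ext
      simp [g]
  · rw [Matrix.det_apply]
    refine IsHomogeneous.sum _ _ _ fun σ _ => ?_
    have h1 : (∏ i : Fin 3, (X (a (σ i) i) : MvPolynomial (MinorIndex (u+1) m n) k)).IsHomogeneous 3 := by
      have := IsHomogeneous.prod (R := k) Finset.univ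
        (fun i : Fin 3 => (X (a (σ i) i) : MvPolynomial (MinorIndex (u+1) m n) k))
        (fun _ => 1) (fun i _ => isHomogeneous_X _ _)
      simpa using this
    rcases Int.units_eq_one_or (Equiv.Perm.sign σ) with h | h
    · simpa [h] using h1
    · simpa [h] using h1.neg
  · apply aux_notMem _ (fun q hq => hq.2) a ha
    rintro q ⟨hq, hq2⟩ i j hij
    have hne : ρ i ≠ ρ j := fun h => hij (hρ h)
    have hcardK : (((Finset.univ.erase (ρ i)).erase (ρ j)).map ι).card = D.card := by
      rw [hD, Finset.card_map, Finset.card_erase_of_mem (by simp [hne.symm]),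
        Finset.card_erase_of_mem (by simp)]
      simp
    refine aux_coeff k (u+1) m n (a i i) (a j j)
      (((Finset.univ.erase (ρ i)).erase (ρ j)).map ι) D (ι (ρ i)) (ι (ρ j)) (κ i) (κ j)
      ?_ ?_ ?_ hcardK ?_ ?_ rfl rfl q hq hq2
    · simp
    · simp
    · exact fun h => hne (ι.injective h)
    · simp only [a, I]
      rw [← Finset.map_insert, Finset.insert_erase (by simp [hne.symm])]
    · simp only [a, I]
      rw [← Finset.map_insert, Finset.erase_right_comm, Finset.insert_erase (by simp [hne])]
end

section
/- For all 2 ≤ m ≤ n and every field k of characteristic 0, every homogeneous element of degree 4 of J_2(m,n) lies in the ideal of S_2(m,n) generated by the elements of J_2(m,n) of degree at most 3. In other words, J_2(m,n) has no minimal generators of degree 4. -/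
open MvPolynomial

namespace QM
open Equiv Finset

abbrev Pos := Fin 4 × Fin 2
abbrev G := Equiv.Perm Pos
abbrev Eg := Fin 4 → Equiv.Perm (Fin 2)

def fl : Eg →* G where
  toFun ε := ⟨fun p => (p.1, ε p.1 p.2), fun p => (p.1, (ε p.1).symm p.2),
    fun p => by simp, fun p => by simp⟩
  map_one' := by ext p <;> rfl
  map_mul' _ _ := by ext p <;> rfl

def bw : Equiv.Perm (Fin 4) →* G where
  toFun w := ⟨fun p => (w p.1, p.2), fun p => (w.symm p.1, p.2),
    fun p => by simp, fun p => by simp⟩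
  map_one' := by ext p <;> rfl
  map_mul' _ _ := by ext p <;> rfl

def sg : Eg →* ℤˣ where
  toFun ε := ∏ a, Equiv.Perm.sign (ε a)
  map_one' := by simp
  map_mul' _ _ := by simp [Finset.prod_mul_distrib]

lemma sg_inv (ε : Eg) : sg ε⁻¹ = sg ε := by rw [map_inv, Int.units_inv_eq_self]

lemma fl_apply (ε : Eg) (p : Pos) : fl ε p = (p.1, ε p.1 p.2) := rfl
lemma bw_apply (w : Equiv.Perm (Fin 4)) (p : Pos) : bw w p = (w p.1, p.2) := rfl

lemma fl_bw (ε : Eg) (w : Equiv.Perm (Fin 4)) :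
    fl ε * bw w = bw w * fl (fun a => ε (w a)) := by
  ext p <;> rfl

lemma bw_fl (ε : Eg) (w : Equiv.Perm (Fin 4)) :
    bw w * fl ε = fl (fun a => ε (w⁻¹ a)) * bw w := by
  rw [fl_bw]; simp

lemma sg_comp (ε : Eg) (w : Equiv.Perm (Fin 4)) : sg (fun a => ε (w a)) = sg ε :=
  Equiv.prod_comp w (fun a => Equiv.Perm.sign (ε a))

def act {U : Type*} (r : Pos → U) (g : G) : Pos → U := fun p => r (g p)

lemma act_act {U : Type*} (r : Pos → U) (g h : G) : act (act r g) h = act r (g * h) := rfl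
lemma act_one {U : Type*} (r : Pos → U) : act r 1 = r := rfl

section abs
variable {U W Q : Type*} [AddCommGroup Q]

def sw (Y : (Pos → U) → (Pos → W) → Q) : (Pos → W) → (Pos → U) → Q := fun c r => Y r c

def LL (Y : (Pos → U) → (Pos → W) → Q) (g : G) (r : Pos → U) (c : Pos → W) : Q :=
  ∑ ε : Eg, sg ε • Y (act r (fl ε * g)) c

def DD (Y : (Pos → U) → (Pos → W) → Q) (g : G) (r : Pos → U) (c : Pos → W) : Q :=
  LL Y g r c - LL (sw Y) g⁻¹ c r

structure Good (Y : (Pos → U) → (Pos → W) → Q) : Prop where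
  hr : ∀ r c ε, Y (act r (fl ε)) c = sg ε • Y r c
  hc : ∀ r c ε, Y r (act c (fl ε)) = sg ε • Y r c
  hw : ∀ r c w, Y (act r (bw w)) (act c (bw w)) = Y r c
  hK : ∀ (g : G) (a : Fin 4), (∀ i, g (a, i) = (a, i)) → ∀ r c, DD Y g r c = 0
  h2 : ∀ (n : ℕ) (q : Q), n ≠ 0 → n • q = 0 → q = 0

variable {Y : (Pos → U) → (Pos → W) → Q}

lemma DD_sw (g : G) (r : Pos → U) (c : Pos → W) : DD (sw Y) g⁻¹ c r = - DD Y g r c := by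
  have : sw (sw Y) = Y := rfl
  simp [DD, this]

lemma DD_sw' (g : G) (r : Pos → U) (c : Pos → W) : DD (sw Y) g c r = - DD Y g⁻¹ r c := by
  rw [← DD_sw, inv_inv]

lemma Good.sw (h : Good Y) : Good (sw Y) where
  hr r c ε := h.hc c r ε
  hc r c ε := h.hr c r ε
  hw r c w := h.hw c r w
  hK g a hg r c := by
    rw [DD_sw', h.hK g⁻¹ a, neg_zero]
    intro i
    rw [Equiv.Perm.inv_eq_iff_eq, hg i]
  h2 := h.h2

lemma LL_fl_left (δ : Eg) (g : G) (r : Pos → U) (c : Pos → W) :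
    LL Y (fl δ * g) r c = sg δ • LL Y g r c := by
  unfold LL
  rw [Finset.smul_sum]
  refine Fintype.sum_equiv (Equiv.mulRight δ) _ _ fun ε => ?_
  simp only [Equiv.coe_mulRight, map_mul, smul_smul, mul_assoc]
  congr 1
  rw [mul_comm (sg ε), ← mul_assoc, Int.units_mul_self, one_mul]

lemma Good.LL_fl_right (h : Good Y) (δ : Eg) (g : G) (r : Pos → U) (c : Pos → W) :
    LL Y (g * fl δ) r c = sg δ • LL Y g r c := by
  unfold LL
  rw [Finset.smul_sum]
  refine Finset.sum_congr rfl fun ε _ => ?_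
  rw [← mul_assoc, ← act_act, h.hr, smul_comm]

lemma LL_bw_left (w : Equiv.Perm (Fin 4)) (g : G) (r : Pos → U) (c : Pos → W) :
    LL Y (bw w * g) r c = LL Y g (act r (bw w)) c := by
  unfold LL
  refine Fintype.sum_equiv (Equiv.arrowCongr w⁻¹ (Equiv.refl _)) _ _ fun ε => ?_
  have : (Equiv.arrowCongr w⁻¹ (Equiv.refl _)) ε = fun a => ε (w a) := by
    rfl
  rw [this, sg_comp, ← mul_assoc, fl_bw, act_act, mul_assoc]

lemma Good.hw' (h : Good Y) (w : Equiv.Perm (Fin 4)) (r : Pos → U) (c : Pos → W) :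
    Y (act r (bw w)) c = Y r (act c (bw w)⁻¹) := by
  rw [← h.hw r _ w, act_act, inv_mul_cancel, act_one]

lemma Good.LL_bw_right (h : Good Y) (w : Equiv.Perm (Fin 4)) (g : G) (r : Pos → U) (c : Pos → W) :
    LL Y (g * bw w) r c = LL Y g r (act c (bw w)⁻¹) := by
  unfold LL
  refine Finset.sum_congr rfl fun ε _ => ?_
  rw [← mul_assoc, ← act_act, h.hw']

lemma Good.DD_fl_left (h : Good Y) (δ : Eg) (g : G) (r : Pos → U) (c : Pos → W) :
    DD Y (fl δ * g) r c = sg δ • DD Y g r c := by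
  unfold DD
  rw [LL_fl_left, mul_inv_rev, ← map_inv, h.sw.LL_fl_right, sg_inv, smul_sub]

lemma Good.DD_fl_right (h : Good Y) (δ : Eg) (g : G) (r : Pos → U) (c : Pos → W) :
    DD Y (g * fl δ) r c = sg δ • DD Y g r c := by
  unfold DD
  rw [h.LL_fl_right, mul_inv_rev, ← map_inv, LL_fl_left, sg_inv, smul_sub]

lemma Good.DD_bw_left (h : Good Y) (w : Equiv.Perm (Fin 4)) (g : G) (r : Pos → U) (c : Pos → W) :
    DD Y (bw w * g) r c = DD Y g (act r (bw w)) c := by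
  unfold DD
  rw [LL_bw_left, mul_inv_rev, ← map_inv, h.sw.LL_bw_right, map_inv, inv_inv]

lemma Good.DD_bw_right (h : Good Y) (w : Equiv.Perm (Fin 4)) (g : G) (r : Pos → U) (c : Pos → W) :
    DD Y (g * bw w) r c = DD Y g r (act c (bw w)⁻¹) := by
  unfold DD
  rw [h.LL_bw_right, mul_inv_rev, ← map_inv, LL_bw_left]

def Bal (Y : (Pos → U) → (Pos → W) → Q) (g : G) : Prop := ∀ r c, DD Y g r c = 0

lemma Bal.eq {g : G} (h : Bal Y g) (r : Pos → U) (c : Pos → W) :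
    LL Y g r c = LL (QM.sw Y) g⁻¹ c r := sub_eq_zero.1 (h r c)

lemma LL_comp (g h : G) (r : Pos → U) (c : Pos → W) :
    ∑ ε, sg ε • LL Y (g * fl ε * h) r c = ∑ ε, sg ε • LL Y h (act r (fl ε * g)) c := by
  simp only [LL, Finset.smul_sum]
  rw [Finset.sum_comm]
  refine Finset.sum_congr rfl fun ε _ => Finset.sum_congr rfl fun δ _ => ?_
  rw [smul_comm, act_act]; simp only [mul_assoc]

lemma DD_comp {g h : G} (hg : Bal Y g) (hh : Bal Y h) (r : Pos → U) (c : Pos → W) :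
    ∑ ε, sg ε • DD Y (g * fl ε * h) r c = 0 := by
  simp only [DD, smul_sub, Finset.sum_sub_distrib]
  rw [sub_eq_zero, LL_comp]
  have h1 : ∑ ε, sg ε • LL (QM.sw Y) (g * fl ε * h)⁻¹ c r
      = ∑ ε, sg ε • LL (QM.sw Y) (h⁻¹ * fl ε * g⁻¹) c r := by
    refine Fintype.sum_equiv (Equiv.inv _) _ _ fun ε => ?_
    simp [sg_inv, mul_assoc]
  rw [h1, LL_comp]
  simp only [hh.eq, ← hg.eq]
  simp only [LL, Finset.smul_sum]
  rw [Finset.sum_comm]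
  refine Finset.sum_congr rfl fun ε _ => Finset.sum_congr rfl fun δ _ => ?_
  rw [smul_comm]; rfl

def flip (a : Fin 4) : Eg := Pi.mulSingle a (Equiv.swap 0 1)
def T (a : Fin 4) : G := fl (flip a)

lemma sg_flip (a : Fin 4) : sg (flip a) = -1 := by revert a; decide

lemma Good.DD_T_left (h : Good Y) (a : Fin 4) (g : G) (r : Pos → U) (c : Pos → W) :
    DD Y (T a * g) r c = - DD Y g r c := by
  rw [T, h.DD_fl_left, sg_flip]; simp

lemma Good.DD_T_right (h : Good Y) (a : Fin 4) (g : G) (r : Pos → U) (c : Pos → W) :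
    DD Y (g * T a) r c = - DD Y g r c := by
  rw [T, h.DD_fl_right, sg_flip]; simp

lemma fin2_cases (u : Equiv.Perm (Fin 2)) : u = 1 ∨ u = Equiv.swap 0 1 := by
  revert u; decide

lemma eg_comm (a b : Eg) : a * b = b * a := by
  funext i
  rcases fin2_cases (a i) with h | h <;> rcases fin2_cases (b i) with h' | h' <;>
    simp [h, h']

lemma eg_decomp (ε : Eg) : ε = Pi.mulSingle 0 (ε 0) * Pi.mulSingle 1 (ε 1) *
    Pi.mulSingle 2 (ε 2) * Pi.mulSingle 3 (ε 3) := by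
  funext i
  fin_cases i <;> simp [Pi.mulSingle_apply]

lemma Good.move (h : Good Y) {g k : G} (hg : Bal Y g) (hk : Bal Y k) (c : Fin 4)
    (hb : ∀ b, b ≠ c → (∃ b', g * T b = T b' * g) ∨ (∃ b', T b * k = k * T b'))
    (r : Pos → U) (d : Pos → W) : DD Y (g * k) r d = DD Y (g * T c * k) r d := by
  set f : Eg → Q := fun ε => sg ε • DD Y (g * fl ε * k) r d with hf
  have hsum : ∑ ε, f ε = 0 := DD_comp hg hk r d
  let H : Submonoid Eg :=
    { carrier := {δ | ∀ ε, f (ε * δ) = f ε}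
      one_mem' := fun ε => by simp
      mul_mem' := fun {a b} ha hb ε => by rw [← mul_assoc, hb, ha] }
  have hflip : ∀ b, b ≠ c → flip b ∈ H := by
    intro b hbc ε
    rcases hb b hbc with ⟨b', hb'⟩ | ⟨b', hb'⟩
    · have : g * fl (ε * flip b) * k = T b' * (g * fl ε * k) := by
        rw [eg_comm ε, map_mul, show fl (flip b) = T b from rfl]
        rw [← mul_assoc g, hb']; simp only [mul_assoc]
      simp only [hf]; rw [this, h.DD_T_left, map_mul, sg_flip]; simp
    · have : g * fl (ε * flip b) * k = (g * fl ε * k) * T b' := by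
        rw [map_mul, show fl (flip b) = T b from rfl]
        simp only [mul_assoc]; rw [hb']
      simp only [hf]; rw [this, h.DD_T_right, map_mul, sg_flip]; simp
  have hall : ∀ ε : Eg, f ε = if ε c = 1 then f 1 else f (flip c) := by
    intro ε
    have h1 : Function.update ε c 1 ∈ H := by
      have key : ∀ b, Pi.mulSingle b (Function.update ε c 1 b) ∈ H := ?_
      · rw [eg_decomp (Function.update ε c 1)]
        exact H.mul_mem (H.mul_mem (H.mul_mem (key 0) (key 1)) (key 2)) (key 3)
      intro b
      by_cases hbc : b = c
      · subst hbc; simp [H.one_mem]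
      · rw [Function.update_of_ne hbc]
        rcases fin2_cases (ε b) with h1 | h1
        · rw [h1]; simp [H.one_mem]
        · rw [h1]; exact hflip b hbc
    have h2 : ε = Pi.mulSingle c (ε c) * Function.update ε c 1 := by
      funext b
      by_cases hbc : b = c
      · subst hbc; simp
      · simp [hbc]
    have h3 : f ε = f (Pi.mulSingle c (ε c)) := by
      conv_lhs => rw [h2]
      exact h1 _
    rw [h3]
    rcases fin2_cases (ε c) with h1 | h1
    · rw [h1]; simp
    · rw [h1, if_neg (by decide)]; rfl
  rw [Finset.sum_congr rfl fun ε _ => hall ε] at hsum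
  rw [Finset.sum_ite, Finset.sum_const, Finset.sum_const] at hsum
  have c1 : #{ε : Eg | ε c = 1} = 8 := by clear * -; revert c; decide +kernel
  have c2 : #{ε : Eg | ¬ ε c = 1} = 8 := by clear * -; revert c; decide +kernel
  rw [c1, c2, ← smul_add] at hsum
  have := h.h2 8 _ (by norm_num) hsum
  simp only [hf, map_one, sg_flip, mul_one, one_smul] at this
  rw [show fl (flip c) = T c from rfl] at this
  simpa [add_neg_eq_zero] using this

end abs
end QM

namespace QM
open Equiv Finset
section abs2
variable {U W Q : Type*} [AddCommGroup Q] {Y : (Pos → U) → (Pos → W) → Q}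

lemma Good.T_left_iff (h : Good Y) (a : Fin 4) (g : G) : Bal Y (T a * g) ↔ Bal Y g := by
  simp only [Bal, h.DD_T_left, neg_eq_zero]

lemma Good.T_right_iff (h : Good Y) (a : Fin 4) (g : G) : Bal Y (g * T a) ↔ Bal Y g := by
  simp only [Bal, h.DD_T_right, neg_eq_zero]

lemma Good.bw_left (h : Good Y) (w : Equiv.Perm (Fin 4)) (g : G) (hg : Bal Y g) :
    Bal Y (bw w * g) := fun r c => by rw [h.DD_bw_left, hg]

lemma Good.bw_right (h : Good Y) (w : Equiv.Perm (Fin 4)) (g : G) (hg : Bal Y g) :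
    Bal Y (g * bw w) := fun r c => by rw [h.DD_bw_right, hg]

lemma Good.bw_left_iff (h : Good Y) (w : Equiv.Perm (Fin 4)) (g : G) :
    Bal Y (bw w * g) ↔ Bal Y g := by
  refine ⟨fun hg => ?_, h.bw_left w g⟩
  have := h.bw_left w⁻¹ _ hg
  rwa [← mul_assoc, ← map_mul, inv_mul_cancel, map_one, one_mul] at this

lemma Good.bw_right_iff (h : Good Y) (w : Equiv.Perm (Fin 4)) (g : G) :
    Bal Y (g * bw w) ↔ Bal Y g := by
  refine ⟨fun hg => ?_, h.bw_right w g⟩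
  have := h.bw_right w⁻¹ _ hg
  rwa [mul_assoc, ← map_mul, mul_inv_cancel, map_one, mul_one] at this

/-- moving one position to another -/
lemma exists_mover (p q : Pos) : ∃ (w : Equiv.Perm (Fin 4)) (b : Bool),
    (bw w * (if b then T q.1 else 1)) q = p ∧
    ∀ s : Pos, s.1 ≠ p.1 → s.1 ≠ q.1 → (bw w * (if b then T q.1 else 1)) s = s := by
  refine ⟨Equiv.swap p.1 q.1, decide (p.2 ≠ q.2), ?_⟩
  revert p q; decide +kernel

lemma Good.mover_left (h : Good Y) (p q : Pos) : ∃ u : G, u q = p ∧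
    (∀ s : Pos, s.1 ≠ p.1 → s.1 ≠ q.1 → u s = s) ∧
    (∀ s t : Pos, s.1 = t.1 → (u s).1 = (u t).1) ∧
    (∀ g, Bal Y (u * g) → Bal Y g) ∧ (∀ g, Bal Y (g * u) → Bal Y g) := by
  obtain ⟨w, b, h1, h2⟩ := exists_mover p q
  refine ⟨_, h1, h2, fun s t hst => by cases b <;> simp [bw_apply, T, fl_apply, hst], fun g hg => ?_, fun g hg => ?_⟩
  · rw [mul_assoc, h.bw_left_iff] at hg
    cases b
    · simpa using hg
    · simpa [h.T_left_iff] using hg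
  · rw [← mul_assoc] at hg
    cases b
    · simpa [h.bw_right_iff] using hg
    · simpa [h.T_right_iff, h.bw_right_iff] using hg

lemma pos_cases {a : Fin 4} {p : Pos} (hp : p.1 = a) : p = (a, 0) ∨ p = (a, 1) := by
  subst hp; revert p; decide

lemma Good.fp (h : Good Y) (g : G) (a : Fin 4) (hg : (g (a, 0)).1 = (g (a, 1)).1) : Bal Y g := by
  obtain ⟨u, hu, hu2, hb, hl, -⟩ := h.mover_left (a, 0) (g (a, 0))
  apply hl
  have h0 : (u * g) (a, 0) = (a, 0) := hu
  have h1 : ((u * g) (a, 1)).1 = a := by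
    have := hb _ _ hg
    rw [hu] at this
    exact this.symm
  have h2 : (u * g) (a, 1) = (a, 1) := by
    rcases pos_cases h1 with h2 | h2
    · rw [← h0] at h2
      have := (u * g).injective h2
      simp at this
    · exact h2
  apply h.hK _ a
  intro i
  fin_cases i
  · exact h0
  · exact h2

lemma swap_id (p q : Pos) (hpq : p.1 ≠ q.1) :
    T p.1 * Equiv.swap p q = T q.1 * Equiv.swap p q * bw (Equiv.swap p.1 q.1) ∨
    T p.1 * Equiv.swap p q = T q.1 * Equiv.swap p q * bw (Equiv.swap p.1 q.1) * T p.1 * T q.1 := by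
  revert p q; decide +kernel

lemma swap_comm (p q : Pos) (b : Fin 4) (hpq : p.1 ≠ q.1) (h1 : b ≠ p.1) (h2 : b ≠ q.1) :
    T b * Equiv.swap p q = Equiv.swap p q * T b := by
  revert p q b; decide +kernel

lemma T_conj {g : G} {d o : Fin 4} (h0 : (g (d, 0)).1 = o) (h1 : (g (d, 1)).1 = o) :
    g * T d = T o * g := by
  have hinj : g (d, 0) ≠ g (d, 1) := fun h => by simpa using g.injective h
  have hne : ∀ s : Pos, s.1 ≠ d → (g s).1 ≠ o := by
    intro s hs ho
    have : ∀ s : Pos, s.1 ≠ d → s ≠ (d, 0) ∧ s ≠ (d, 1) := by clear * -; revert d; decide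
    obtain ⟨e0, e1⟩ := this s hs
    have e0' := fun h => e0 (g.injective h)
    have e1' := fun h => e1 (g.injective h)
    rcases pos_cases h0 with h0 | h0 <;> rcases pos_cases h1 with h1 | h1 <;>
      rcases pos_cases ho with ho | ho <;> simp_all
  have hT : ∀ (a : Fin 4) (s : Pos), s.1 ≠ a → T a s = s := by decide
  have hT0 : ∀ (a : Fin 4), T a (a, 0) = (a, 1) := by decide
  have hT1 : ∀ (a : Fin 4), T a (a, 1) = (a, 0) := by decide
  apply Equiv.ext
  intro s
  simp only [Equiv.Perm.mul_apply]
  by_cases hs : s.1 = d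
  · rcases pos_cases hs with rfl | rfl <;>
    rcases pos_cases h0 with h0 | h0 <;> rcases pos_cases h1 with h1 | h1 <;>
      simp_all
  · rw [hT _ _ hs, hT _ _ (hne s hs)]

lemma Good.rm (h : Good Y) (A : G) (p q : Pos) (hpq : p.1 ≠ q.1)
    (hA : (A p).1 = (A (T q.1 q)).1) (r : Pos → U) (c : Pos → W) :
    DD Y A r c = - DD Y (A * bw (Equiv.swap p.1 q.1)) r c := by
  set k : G := Equiv.swap p q with hk
  set g : G := A * k with hg
  have hgk : g * k = A := by rw [hg, mul_assoc, hk, Equiv.swap_mul_self, mul_one]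
  have hq : q = (q.1, 0) ∧ T q.1 q = (q.1, 1) ∨ q = (q.1, 1) ∧ T q.1 q = (q.1, 0) := by
    clear * -; revert q; decide
  have hTp : T q.1 q ≠ p ∧ T q.1 q ≠ q := by clear * - hpq; revert p q; decide
  have g1 : g q = A p := by simp [hg, hk]
  have g2 : g (T q.1 q) = A (T q.1 q) := by
    simp [hg, hk, Equiv.swap_apply_of_ne_of_ne hTp.1 hTp.2]
  rw [← g1, ← g2] at hA
  have hfp : (g (q.1, 0)).1 = (g (q.1, 1)).1 := by
    rcases hq with ⟨e1, e2⟩ | ⟨e1, e2⟩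
    · rw [e2, e1] at hA; exact hA
    · rw [e2, e1] at hA; exact hA.symm
  have hkfp : Bal Y k := by
    obtain ⟨b, b1, b2⟩ : ∃ b, b ≠ p.1 ∧ b ≠ q.1 := by
      clear * -; generalize p.1 = x; generalize q.1 = y; revert x y; decide
    apply h.fp k b
    rw [hk, Equiv.swap_apply_of_ne_of_ne, Equiv.swap_apply_of_ne_of_ne] <;>
      rintro rfl <;> simp at b1 b2
  have hc : g * T q.1 = T (g (q.1, 0)).1 * g := T_conj rfl hfp.symm
  have := h.move (h.fp g _ hfp) hkfp p.1 (fun b hb => by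
    by_cases hbq : b = q.1
    · left; subst hbq; exact ⟨_, hc⟩
    · right; exact ⟨b, swap_comm p q b hpq hb hbq⟩) r c
  rw [hgk, mul_assoc] at this
  rw [this]
  rcases swap_id p q hpq with e | e
  · rw [hk, e, mul_assoc (T q.1), ← mul_assoc g, hc, mul_assoc, h.DD_T_left, ← mul_assoc g, hgk]
  · rw [hk, e, ← mul_assoc, ← mul_assoc, h.DD_T_right, h.DD_T_right, neg_neg,
      mul_assoc (T q.1), ← mul_assoc g, hc, mul_assoc, h.DD_T_left, ← mul_assoc g, hgk]

lemma Good.lm (h : Good Y) (A : G) (p q : Pos) (hpq : p.1 ≠ q.1)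
    (hA : (A⁻¹ p).1 = (A⁻¹ (T q.1 q)).1) (r : Pos → U) (c : Pos → W) :
    DD Y A r c = - DD Y (bw (Equiv.swap p.1 q.1) * A) r c := by
  have := h.sw.rm A⁻¹ p q hpq hA c r
  rw [DD_sw, DD_sw', mul_inv_rev, inv_inv, ← map_inv, Equiv.swap_inv] at this
  exact neg_injective this

def gam : G where
  toFun p := if p.2 = 0 then (p.1, 1) else (p.1 + 1, 0)
  invFun p := if p.2 = 1 then (p.1, 0) else (p.1 - 1, 1)
  left_inv := by decide
  right_inv := by decide

lemma Good.gam_bal (h : Good Y) : Bal Y gam := by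
  intro r c
  have e1 := h.rm QM.gam (3, 1) (0, 1) (by decide) (by decide) r c
  have e2 := h.rm (QM.gam * bw (Equiv.swap 3 0)) (1, 1) (2, 1) (by decide) (by decide) r c
  have f1 := h.lm QM.gam (1, 1) (2, 1) (by decide) (by decide) r c
  have f2 : ∃ p q : Pos, p.1 = 1 ∧ q.1 = 3 ∧
      ((bw (Equiv.swap 1 2) * QM.gam)⁻¹ p).1 = ((bw (Equiv.swap 1 2) * QM.gam)⁻¹ (T q.1 q)).1 := by
    decide
  have f3 : ∃ p q : Pos, p.1 = 2 ∧ q.1 = 3 ∧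
      ((bw (Equiv.swap 1 3) * (bw (Equiv.swap 1 2) * QM.gam))⁻¹ p).1 =
      ((bw (Equiv.swap 1 3) * (bw (Equiv.swap 1 2) * QM.gam))⁻¹ (T q.1 q)).1 := by
    decide
  obtain ⟨p, q, hp, hq, f2⟩ := f2
  obtain ⟨p', q', hp', hq', f3⟩ := f3
  have f2 := h.lm _ p q (by rw [hp, hq]; decide) f2 r c
  have f3 := h.lm _ p' q' (by rw [hp', hq']; decide) f3 r c
  rw [hp, hq] at f2
  rw [hp', hq'] at f3
  have key : QM.gam * bw (Equiv.swap 3 0) * bw (Equiv.swap 1 2) =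
      fl (fun _ => Equiv.swap 0 1) * (bw (Equiv.swap 2 3) * (bw (Equiv.swap 1 3) *
        (bw (Equiv.swap 1 2) * QM.gam))) * fl (fun _ => Equiv.swap 0 1) := by
    decide +kernel
  dsimp only at e1 e2 f1
  rw [key, h.DD_fl_right, h.DD_fl_left, show sg (fun _ => Equiv.swap 0 1) = 1 by decide,
    one_smul, one_smul] at e2
  rw [e2, neg_neg] at e1
  rw [f2, f3, neg_neg] at f1
  have : DD Y QM.gam r c = - DD Y QM.gam r c := by
    conv_rhs => rw [e1]
    exact f1
  refine h.h2 2 _ (by norm_num) ?_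
  rw [two_smul]
  exact eq_neg_iff_add_eq_zero.1 this

end abs2
end QM

namespace QM
open Equiv Finset
section abs3
variable {U W Q : Type*} [AddCommGroup Q] {Y : (Pos → U) → (Pos → W) → Q}

def rot4 : G where
  toFun p := if p.1 = 0 then (if p.2 = 0 then (0, 1) else (1, 0)) else
    if p.1 = 1 then (if p.2 = 0 then (1, 1) else (0, 0)) else p
  invFun p := if p.1 = 0 then (if p.2 = 1 then (0, 0) else (1, 1)) else
    if p.1 = 1 then (if p.2 = 0 then (0, 1) else (1, 0)) else p
  left_inv := by decide
  right_inv := by decide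

lemma Good.type22 (h : Good Y) (g : G) (h0 : g (0, 0) = (0, 1)) (h1 : g (0, 1) = (1, 0))
    (h2 : g (1, 0) = (1, 1)) (h3 : g (1, 1) = (0, 0)) : Bal Y g := by
  set k : G := rot4⁻¹ * g with hk
  have hg : g = rot4 * k := by rw [hk, mul_inv_cancel_left]
  have k0 : k (0, 0) = (0, 0) := by rw [hk, Equiv.Perm.mul_apply, h0]; rfl
  have k1 : k (0, 1) = (0, 1) := by rw [hk, Equiv.Perm.mul_apply, h1]; rfl
  have k2 : k (1, 0) = (1, 0) := by rw [hk, Equiv.Perm.mul_apply, h2]; rfl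
  have k3 : k (1, 1) = (1, 1) := by rw [hk, Equiv.Perm.mul_apply, h3]; rfl
  have c0 : k * T 0 = T 0 * k := T_conj (by rw [k0]) (by rw [k1])
  have c1 : k * T 1 = T 1 * k := T_conj (by rw [k2]) (by rw [k3])
  have d2 : rot4 * T 2 = T 2 * rot4 := by decide +kernel
  have d3 : rot4 * T 3 = T 3 * rot4 := by decide +kernel
  have hr4 : Bal Y rot4 := h.fp _ 2 (by decide)
  have hkb : Bal Y k := h.fp _ 0 (by rw [k0, k1])
  intro r c
  have := h.move hr4 hkb 3 (fun b hb => by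
    fin_cases b
    · exact Or.inr ⟨0, c0.symm⟩
    · exact Or.inr ⟨1, c1.symm⟩
    · exact Or.inl ⟨2, d2⟩
    · simp at hb) r c
  rw [d3, mul_assoc, h.DD_T_left, ← hg] at this
  refine h.h2 2 _ (by norm_num) ?_
  rw [two_smul]
  exact eq_neg_iff_add_eq_zero.1 this

lemma ne_of {g : G} {s t x y : Pos} (hs : g s = x) (ht : g t = y) (h : s ≠ t) : x ≠ y :=
  fun e => h (g.injective (by rw [hs, ht, e]))

theorem Good.all (h : Good Y) (g : G) : Bal Y g := by
  -- step 1
  obtain ⟨u, hu, -, -, hl, -⟩ := h.mover_left (0, 1) (g (0, 0))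
  apply hl
  have a0 : (u * g) (0, 0) = (0, 1) := hu
  generalize u * g = g at a0
  clear hl hu u
  -- step 2
  by_cases hp : (g (0, 1)).1 = 0
  · exact h.fp g 0 (by rw [a0, hp])
  obtain ⟨u, hu, hu2, -, hl, -⟩ := h.mover_left (1, 0) (g (0, 1))
  apply hl
  have b0 : (u * g) (0, 0) = (0, 1) := by
    rw [Equiv.Perm.mul_apply, a0]; exact hu2 _ (by decide) (Ne.symm hp)
  have b1 : (u * g) (0, 1) = (1, 0) := hu
  generalize u * g = g at b0 b1
  clear hl hu hu2 u
  -- step 3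
  obtain ⟨q, hq⟩ := g.surjective (1, 1)
  have hq0 : q.1 ≠ 0 := by
    intro e
    rcases pos_cases e with rfl | rfl
    · rw [b0] at hq; revert hq; decide
    · rw [b1] at hq; revert hq; decide
  obtain ⟨u, hu, hu2, -, -, hr⟩ := h.mover_left q (1, 0)
  apply hr
  have c0 : (g * u) (0, 0) = (0, 1) := by
    rw [Equiv.Perm.mul_apply, hu2 _ (Ne.symm hq0) (by decide), b0]
  have c1 : (g * u) (0, 1) = (1, 0) := by
    rw [Equiv.Perm.mul_apply, hu2 _ (Ne.symm hq0) (by decide), b1]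
  have c2 : (g * u) (1, 0) = (1, 1) := by rw [Equiv.Perm.mul_apply, hu, hq]
  generalize g * u = g at c0 c1 c2
  clear hr hu hu2 u hq hq0 q
  -- step 4
  by_cases hp : g (1, 1) = (0, 0)
  · exact h.type22 g c0 c1 c2 hp
  have hp0 : (g (1, 1)).1 ≠ 0 ∧ (g (1, 1)).1 ≠ 1 := by
    have e0 := ne_of c0 (rfl : g (1, 1) = _) (by decide)
    have e1 := ne_of c1 (rfl : g (1, 1) = _) (by decide)
    have e2 := ne_of c2 (rfl : g (1, 1) = _) (by decide)
    generalize g (1, 1) = p at *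
    clear * - hp e0 e1 e2; revert p; decide
  obtain ⟨u, hu, hu2, -, hl, -⟩ := h.mover_left (2, 0) (g (1, 1))
  apply hl
  have b0 : (u * g) (0, 0) = (0, 1) := by
    rw [Equiv.Perm.mul_apply, c0]; exact hu2 _ (by decide) (Ne.symm hp0.1)
  have b1 : (u * g) (0, 1) = (1, 0) := by
    rw [Equiv.Perm.mul_apply, c1]; exact hu2 _ (by decide) (Ne.symm hp0.2)
  have b2 : (u * g) (1, 0) = (1, 1) := by
    rw [Equiv.Perm.mul_apply, c2]; exact hu2 _ (by decide) (Ne.symm hp0.2)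
  have b3 : (u * g) (1, 1) = (2, 0) := hu
  generalize u * g = g at b0 b1 b2 b3
  clear hl hu hu2 u
  -- step 5
  obtain ⟨q, hq⟩ := g.surjective (2, 1)
  have hq0 : q.1 ≠ 0 ∧ q.1 ≠ 1 := by
    constructor <;> intro e <;> rcases pos_cases e with rfl | rfl
    · rw [b0] at hq; revert hq; decide
    · rw [b1] at hq; revert hq; decide
    · rw [b2] at hq; revert hq; decide
    · rw [b3] at hq; revert hq; decide
  obtain ⟨u, hu, hu2, -, -, hr⟩ := h.mover_left q (2, 0)
  apply hr
  have c0 : (g * u) (0, 0) = (0, 1) := by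
    rw [Equiv.Perm.mul_apply, hu2 _ (Ne.symm hq0.1) (by decide), b0]
  have c1 : (g * u) (0, 1) = (1, 0) := by
    rw [Equiv.Perm.mul_apply, hu2 _ (Ne.symm hq0.1) (by decide), b1]
  have c2 : (g * u) (1, 0) = (1, 1) := by
    rw [Equiv.Perm.mul_apply, hu2 _ (Ne.symm hq0.2) (by decide), b2]
  have c3 : (g * u) (1, 1) = (2, 0) := by
    rw [Equiv.Perm.mul_apply, hu2 _ (Ne.symm hq0.2) (by decide), b3]
  have c4 : (g * u) (2, 0) = (2, 1) := by rw [Equiv.Perm.mul_apply, hu, hq]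
  generalize g * u = g at c0 c1 c2 c3 c4
  clear hr hu hu2 u hq hq0 q b0 b1 b2 b3 hp hp0
  -- step 6
  have hv : ∀ s : Pos, s = (2, 1) ∨ s.1 = 3 → g s = (0, 0) ∨ (g s).1 = 3 := by
    intro s hs
    have e0 := ne_of c0 (rfl : g s = _) (by rintro rfl; revert hs; decide)
    have e1 := ne_of c1 (rfl : g s = _) (by rintro rfl; revert hs; decide)
    have e2 := ne_of c2 (rfl : g s = _) (by rintro rfl; revert hs; decide)
    have e3 := ne_of c3 (rfl : g s = _) (by rintro rfl; revert hs; decide)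
    have e4 := ne_of c4 (rfl : g s = _) (by rintro rfl; revert hs; decide)
    generalize g s = p at *
    clear * - e0 e1 e2 e3 e4; revert p; decide
  by_cases hp : g (2, 1) = (0, 0)
  · apply h.fp g 3
    have e0 := ne_of hp (rfl : g (3, 0) = _) (by decide)
    have e1 := ne_of hp (rfl : g (3, 1) = _) (by decide)
    rw [(hv (3, 0) (Or.inr rfl)).resolve_left (Ne.symm e0),
      (hv (3, 1) (Or.inr rfl)).resolve_left (Ne.symm e1)]
  have hp3 := (hv (2, 1) (Or.inl rfl)).resolve_left hp
  clear hv
  have aux : ∀ a : Fin 4, a ≠ 3 → a ≠ (g (2, 1)).1 := fun a ha => by rw [hp3]; exact ha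
  obtain ⟨u, hu, hu2, -, hl, -⟩ := h.mover_left (3, 0) (g (2, 1))
  apply hl
  have b0 : (u * g) (0, 0) = (0, 1) := by
    rw [Equiv.Perm.mul_apply, c0]; exact hu2 _ (by decide) (aux _ (by decide))
  have b1 : (u * g) (0, 1) = (1, 0) := by
    rw [Equiv.Perm.mul_apply, c1]; exact hu2 _ (by decide) (aux _ (by decide))
  have b2 : (u * g) (1, 0) = (1, 1) := by
    rw [Equiv.Perm.mul_apply, c2]; exact hu2 _ (by decide) (aux _ (by decide))
  have b3 : (u * g) (1, 1) = (2, 0) := by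
    rw [Equiv.Perm.mul_apply, c3]; exact hu2 _ (by decide) (aux _ (by decide))
  have b4 : (u * g) (2, 0) = (2, 1) := by
    rw [Equiv.Perm.mul_apply, c4]; exact hu2 _ (by decide) (aux _ (by decide))
  have b5 : (u * g) (2, 1) = (3, 0) := hu
  generalize u * g = g at b0 b1 b2 b3 b4 b5
  clear hl hu hu2 u
  -- step 7
  have hv : ∀ s : Pos, s.1 = 3 → g s = (0, 0) ∨ g s = (3, 1) := by
    intro s hs
    have e0 := ne_of b0 (rfl : g s = _) (by rintro rfl; revert hs; decide)
    have e1 := ne_of b1 (rfl : g s = _) (by rintro rfl; revert hs; decide)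
    have e2 := ne_of b2 (rfl : g s = _) (by rintro rfl; revert hs; decide)
    have e3 := ne_of b3 (rfl : g s = _) (by rintro rfl; revert hs; decide)
    have e4 := ne_of b4 (rfl : g s = _) (by rintro rfl; revert hs; decide)
    have e5 := ne_of b5 (rfl : g s = _) (by rintro rfl; revert hs; decide)
    generalize g s = p at *
    clear * - e0 e1 e2 e3 e4 e5; revert p; decide
  have hne := ne_of (rfl : g (3, 0) = _) (rfl : g (3, 1) = _) (by decide)
  have fin : ∀ g : G, g (0, 0) = (0, 1) → g (0, 1) = (1, 0) → g (1, 0) = (1, 1) →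
      g (1, 1) = (2, 0) → g (2, 0) = (2, 1) → g (2, 1) = (3, 0) → g (3, 0) = (3, 1) →
      g (3, 1) = (0, 0) → g = gam := by
    intro g h0 h1 h2 h3 h4 h5 h6 h7
    apply Equiv.ext
    rintro ⟨a, i⟩
    fin_cases a <;> fin_cases i
    · exact h0
    · exact h1
    · exact h2
    · exact h3
    · exact h4
    · exact h5
    · exact h6
    · exact h7
  rcases hv (3, 0) rfl with b6 | b6 <;> rcases hv (3, 1) rfl with b7 | b7
  · exact absurd (b6.trans b7.symm) hne
  · rw [← h.T_right_iff 3]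
    rw [fin (g * T 3) b0 b1 b2 b3 b4 b5 b7 b6]
    exact h.gam_bal
  · rw [fin g b0 b1 b2 b3 b4 b5 b6 b7]
    exact h.gam_bal
  · exact absurd (b6.trans b7.symm) hne

end abs3
end QM

namespace QM
open Equiv Finset

section proj
variable {k : Type*} [Field k] [CharZero k]

noncomputable def a0 (k : Type*) [Field k] : MonoidAlgebra k G :=
  ∑ ε : Eg, ((sg ε : ℤ) : k) • MonoidAlgebra.of k G (fl ε)

lemma exists_e0 (k : Type*) [Field k] [CharZero k] : ∃ α : G → MonoidAlgebra k G,
    ∀ p : G, a0 k * MonoidAlgebra.of k G p * (∑ h, α h * (a0 k * MonoidAlgebra.of k G h))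
      = a0 k * MonoidAlgebra.of k G p := by
  classical
  have : NeZero (Nat.card G : k) := ⟨by
    rw [Nat.card_eq_fintype_card]; exact_mod_cast Fintype.card_ne_zero⟩
  let N : Submodule (MonoidAlgebra k G) (MonoidAlgebra k G) :=
    Submodule.span _ (Set.range fun h : G => a0 k * MonoidAlgebra.of k G h)
  obtain ⟨N', hN⟩ := MonoidAlgebra.Submodule.exists_isCompl N
  have h1 : (1 : MonoidAlgebra k G) ∈ N ⊔ N' := by rw [hN.sup_eq_top]; trivial
  obtain ⟨e, he, e', he', h1⟩ := Submodule.mem_sup.1 h1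
  obtain ⟨α, hα⟩ := (Submodule.mem_span_range_iff_exists_fun _).1 he
  refine ⟨α, fun p => ?_⟩
  simp only [smul_eq_mul] at hα
  rw [hα]
  set x := a0 k * MonoidAlgebra.of k G p with hx
  have hxN : x ∈ N := Submodule.subset_span ⟨p, rfl⟩
  have h3 : x * e' = x - x * e := by rw [eq_sub_iff_add_eq, ← mul_add, add_comm e', h1, mul_one]
  have h4 : x * e' ∈ N := by rw [h3]; exact N.sub_mem hxN (N.smul_mem x he)
  have h5 : x * e' ∈ N' := N'.smul_mem x he'
  have h6 : x * e' = 0 := by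
    have := Submodule.mem_inf.2 ⟨h4, h5⟩
    rw [hN.inf_eq_bot] at this
    simpa using this
  rw [h6] at h3
  exact (sub_eq_zero.1 h3.symm).symm

lemma exists_kappa (k : Type*) [Field k] [CharZero k] : ∃ κ : G → G → k,
    ∀ {Q : Type*} [AddCommGroup Q] [Module k Q] (Λ : G → Q),
      (∀ ε x, Λ (fl ε * x) = sg ε • Λ x) → ∀ p : G,
      ∑ g, ∑ h, κ g h • ∑ ε, sg ε • Λ (p * g * fl ε * h) = Λ p := by
  obtain ⟨α, hα⟩ := exists_e0 k
  refine ⟨fun g h => (α h).coeff g, fun {Q} _ _ Λ hΛ p => ?_⟩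
  let L : MonoidAlgebra k G →ₗ[k] Q := (Finsupp.linearCombination k Λ) ∘ₗ
    (MonoidAlgebra.coeffLinearEquiv k).toLinearMap
  have hL : ∀ x, L (MonoidAlgebra.of k G x) = Λ x := by
    intro x
    simp [L, MonoidAlgebra.of]
  have hsum : ∀ a : MonoidAlgebra k G, a = ∑ g, a.coeff g • MonoidAlgebra.of k G g := by
    intro a
    ext x
    simp [MonoidAlgebra.of, Finsupp.single_apply]
  have hsg : ∀ (ε : Eg) (q : Q), ((sg ε : ℤ) : k) • q = sg ε • q := by
    intro ε q
    rw [Int.cast_smul_eq_zsmul]; rfl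
  have hL0 : ∀ x, L (a0 k * MonoidAlgebra.of k G x) = (Fintype.card Eg : k) • Λ x := by
    intro x
    rw [a0, Finset.sum_mul, map_sum]
    simp only [smul_mul_assoc, map_smul, ← map_mul, hL, hΛ, hsg, smul_smul, Int.units_mul_self, one_smul]
    simp
    norm_cast
  have hL1 : ∀ a, L (a0 k * a) = (Fintype.card Eg : k) • L a := by
    intro a
    rw [hsum a]
    simp only [Finset.mul_sum, map_sum, mul_smul_comm, map_smul, hL0, hL, Finset.smul_sum]
    refine Finset.sum_congr rfl fun g _ => smul_comm _ _ _
  have hc : (Fintype.card Eg : k) ≠ 0 := by exact_mod_cast Fintype.card_ne_zero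
  have key : L (MonoidAlgebra.of k G p * (∑ h, α h * (a0 k * MonoidAlgebra.of k G h))) = Λ p := by
    have h1 := hL1 (MonoidAlgebra.of k G p * (∑ h, α h * (a0 k * MonoidAlgebra.of k G h)))
    rw [← mul_assoc, hα, hL0] at h1
    exact (smul_right_injective Q hc h1).symm
  rw [← key, Finset.mul_sum, map_sum, Finset.sum_comm]
  refine Finset.sum_congr rfl fun h _ => ?_
  conv_rhs => rw [hsum (α h)]
  simp only [a0, Finset.sum_mul, Finset.mul_sum, map_sum, smul_mul_assoc, mul_smul_comm, map_smul,
    ← map_mul, hL, hsg, Finset.smul_sum]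
  rw [Finset.sum_comm]
  simp only [mul_assoc]
  exact Finset.sum_congr rfl fun x _ => Finset.sum_congr rfl fun y _ => smul_comm _ _ _

variable {U W Q : Type*} [AddCommGroup Q] [Module k Q]
  {Y : (Pos → U) → (Pos → W) → Q}

include k in
theorem Good.exists_s (h : Good Y) : ∃ s : (Pos → U) → (Pos → W) → Q,
    (∀ r c (q : G), s (act r q) (act c q) = s r c) ∧
    ∀ r c, ∑ ε : Eg, sg ε • s (act r (fl ε)) c = Y r c := by
  obtain ⟨κ, hκ⟩ := exists_kappa k
  let s : (Pos → U) → (Pos → W) → Q := fun r c =>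
    (Fintype.card G : k)⁻¹ • ∑ p : G, ∑ g, ∑ h', κ g h' • Y (act r (p * g)) (act c (p * h'⁻¹))
  refine ⟨s, fun r c q => ?_, fun r c => ?_⟩
  · simp only [s, act_act]
    congr 1
    simp only [← mul_assoc]
    exact Fintype.sum_equiv (Equiv.mulLeft q) _ _ (fun p => rfl)
  · have hG : (Fintype.card G : k) ≠ 0 := by exact_mod_cast Fintype.card_ne_zero
    simp only [s, act_act]
    simp only [smul_comm (sg _) ((Fintype.card G : k)⁻¹), ← Finset.smul_sum]
    rw [inv_smul_eq_iff₀ hG]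
    have key : ∀ p : G, ∑ g, ∑ h', κ g h' • ∑ ε : Eg,
        sg ε • Y (act r (fl ε * (p * g))) (act c (p * h'⁻¹)) = Y r c := by
      intro p
      have h1 := hκ (fun x => Y r (act c (p * x⁻¹))) (fun ε x => by
        have := h.hc r (act c (p * x⁻¹)) ε⁻¹
        rw [act_act, sg_inv] at this
        rw [← this, mul_inv_rev, map_inv, mul_assoc]) p
      simp only [mul_inv_cancel, act_one] at h1
      rw [← h1]
      refine Finset.sum_congr rfl fun g _ => Finset.sum_congr rfl fun h' _ => ?_
      congr 1
      have h2 := (h.all (p * g)).eq (r := r) (c := act c (p * h'⁻¹))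
      unfold LL at h2
      rw [h2]
      refine Fintype.sum_equiv (Equiv.inv Eg) _ _ fun ε => ?_
      simp only [Equiv.inv_apply, sg_inv, sw, act_act]
      congr 3
    calc _ = ∑ p : G, ∑ g, ∑ h', κ g h' • ∑ ε : Eg,
        sg ε • Y (act r (fl ε * (p * g))) (act c (p * h'⁻¹)) := by
          simp only [Finset.smul_sum]
          rw [Finset.sum_comm]
          refine Finset.sum_congr rfl fun p _ => ?_
          rw [Finset.sum_comm]
          refine Finset.sum_congr rfl fun g _ => ?_
          rw [Finset.sum_comm]
          refine Finset.sum_congr rfl fun h' _ => ?_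
          refine Finset.sum_congr rfl fun ε _ => ?_
          rw [smul_comm]
      _ = _ := by
          simp only [key]
          simp only [Finset.sum_const, Finset.card_univ]
          exact (Nat.cast_smul_eq_nsmul k _ _).symm
end proj
end QM

namespace QM
open Equiv Finset

section conc
variable {k : Type*} [Field k] {m n : ℕ}

def sn {l : ℕ} (u : Fin 2 → Fin l) : ℤˣ := if u 0 < u 1 then 1 else -1

noncomputable def yb (k : Type*) [Field k] (u : Fin 2 → Fin m) (v : Fin 2 → Fin n) :
    MvPolynomial (MinorIndex 2 m n) k :=
  if h : u 0 ≠ u 1 ∧ v 0 ≠ v 1 then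
    (sn u * sn v) • MvPolynomial.X ⟨({u 0, u 1}, {v 0, v 1}),
      Finset.card_pair h.1, Finset.card_pair h.2⟩
  else 0

lemma perm2 (σ : Equiv.Perm (Fin 2)) : σ = 1 ∨ σ = Equiv.swap 0 1 := by
  revert σ; decide

lemma sn_swap {l : ℕ} (u : Fin 2 → Fin l) (h : u 0 ≠ u 1) :
    sn (fun i => u (Equiv.swap 0 1 i)) = - sn u := by
  simp only [sn, Equiv.swap_apply_left, Equiv.swap_apply_right]
  rcases lt_or_gt_of_ne h with h | h
  · rw [if_neg h.not_gt, if_pos h]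
  · rw [if_pos h, if_neg h.not_gt, neg_neg]

lemma yb_r (u : Fin 2 → Fin m) (v : Fin 2 → Fin n) (σ : Equiv.Perm (Fin 2)) :
    yb k (fun i => u (σ i)) v = Equiv.Perm.sign σ • yb k u v := by
  rcases perm2 σ with rfl | rfl
  · simp
  · by_cases h : u 0 ≠ u 1 ∧ v 0 ≠ v 1
    · have h' : u (Equiv.swap 0 1 0) ≠ u (Equiv.swap 0 1 1) ∧ v 0 ≠ v 1 := by
        simpa using ⟨h.1.symm, h.2⟩
      unfold yb
      rw [dif_pos h, dif_pos h', sn_swap u h.1, Equiv.Perm.sign_swap (by decide), smul_smul]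
      congr 1
      · simp
      · congr 1
        apply Subtype.ext
        simp [Finset.pair_comm]
    · have h' : ¬ (u (Equiv.swap 0 1 0) ≠ u (Equiv.swap 0 1 1) ∧ v 0 ≠ v 1) := by
        intro h1; apply h; simpa using ⟨fun h2 => h1.1 (by simpa using h2.symm), h1.2⟩
      unfold yb
      rw [dif_neg h, dif_neg h', smul_zero]

lemma yb_c (u : Fin 2 → Fin m) (v : Fin 2 → Fin n) (σ : Equiv.Perm (Fin 2)) :
    yb k u (fun i => v (σ i)) = Equiv.Perm.sign σ • yb k u v := by
  rcases perm2 σ with rfl | rfl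
  · simp
  · by_cases h : u 0 ≠ u 1 ∧ v 0 ≠ v 1
    · have h' : u 0 ≠ u 1 ∧ v (Equiv.swap 0 1 0) ≠ v (Equiv.swap 0 1 1) := by
        simpa using ⟨h.1, h.2.symm⟩
      unfold yb
      rw [dif_pos h, dif_pos h', sn_swap v h.2, Equiv.Perm.sign_swap (by decide), smul_smul]
      congr 1
      · simp
      · congr 1
        apply Subtype.ext
        simp [Finset.pair_comm]
    · have h' : ¬ (u 0 ≠ u 1 ∧ v (Equiv.swap 0 1 0) ≠ v (Equiv.swap 0 1 1)) := by
        intro h1; apply h; simpa using ⟨h1.1, fun h2 => h1.2 (by simpa using h2.symm)⟩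
      unfold yb
      rw [dif_neg h, dif_neg h', smul_zero]

lemma usmul_eq {A : Type*} [AddCommGroup A] (z : ℤˣ) (x : A) : z • x = (z : ℤ) • x := rfl

lemma map_usmul {A B F : Type*} [AddCommGroup A] [AddCommGroup B] [FunLike F A B]
    [AddMonoidHomClass F A B] (f : F) (z : ℤˣ) (x : A) : f (z • x) = z • f x := by
  rw [usmul_eq, usmul_eq, map_zsmul]

lemma sorted_cases {l : ℕ} (u : Fin 2 → Fin l) :
    u 0 = u 1 ∨ ∃ (u' : Fin 2 → Fin l) (σ : Equiv.Perm (Fin 2)), u' 0 < u' 1 ∧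
      u = fun i => u' (σ i) := by
  rcases lt_trichotomy (u 0) (u 1) with h | h | h
  · exact Or.inr ⟨u, 1, h, rfl⟩
  · exact Or.inl h
  · refine Or.inr ⟨fun i => u (Equiv.swap 0 1 i), Equiv.swap 0 1, by simpa using h, ?_⟩
    ext i; simp

lemma emb_pair {l : ℕ} (u : Fin 2 → Fin l) (h : u 0 < u 1) (hc : ({u 0, u 1} : Finset (Fin l)).card = 2)
    (i : Fin 2) : (({u 0, u 1} : Finset (Fin l)).orderIsoOfFin hc i : Fin l) = u i := by
  have h1 := Finset.orderEmbOfFin_unique hc (f := u)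
    (fun x => by fin_cases x <;> simp) (by
      rw [Fin.strictMono_iff_lt_succ]
      intro i; fin_cases i; simpa using h)
  rw [Finset.coe_orderIsoOfFin_apply]
  exact (congrFun h1 i).symm

lemma yb_sorted (u : Fin 2 → Fin m) (v : Fin 2 → Fin n) (hu : u 0 < u 1) (hv : v 0 < v 1) :
    yb k u v = MvPolynomial.X ⟨({u 0, u 1}, {v 0, v 1}),
      Finset.card_pair hu.ne, Finset.card_pair hv.ne⟩ := by
  unfold yb
  rw [dif_pos ⟨hu.ne, hv.ne⟩]
  simp [sn, hu, hv]

noncomputable def bl (k : Type*) [Field k] (u : Fin 2 → Fin m) (v : Fin 2 → Fin n) :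
    MvPolynomial (Fin m × Fin n) k :=
  Matrix.det (Matrix.of fun a b : Fin 2 => MvPolynomial.X (u a, v b))

lemma bl_r (u : Fin 2 → Fin m) (v : Fin 2 → Fin n) (σ : Equiv.Perm (Fin 2)) :
    bl k (fun i => u (σ i)) v = Equiv.Perm.sign σ • bl k u v := by
  rcases perm2 σ with rfl | rfl
  · simp
  · simp [bl, Matrix.det_fin_two]; try ring

lemma bl_c (u : Fin 2 → Fin m) (v : Fin 2 → Fin n) (σ : Equiv.Perm (Fin 2)) :
    bl k u (fun i => v (σ i)) = Equiv.Perm.sign σ • bl k u v := by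
  rcases perm2 σ with rfl | rfl
  · simp
  · simp [bl, Matrix.det_fin_two]; try ring

lemma pi_yb (u : Fin 2 → Fin m) (v : Fin 2 → Fin n) :
    minorPresentation k 2 m n (yb k u v) = bl k u v := by
  rcases sorted_cases u with hu | ⟨u, σ, hu, rfl⟩
  · have : yb k u v = 0 := by unfold yb; rw [dif_neg (by tauto)]
    rw [this, map_zero, bl, Matrix.det_fin_two]
    simp [hu, mul_comm]
  rcases sorted_cases v with hv | ⟨v, τ, hv, rfl⟩
  · have : yb k (fun i => u (σ i)) v = 0 := by unfold yb; rw [dif_neg (by tauto)]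
    rw [this, map_zero, bl, Matrix.det_fin_two]
    simp [hv]
  rw [yb_r, yb_c, bl_r, bl_c, map_usmul, map_usmul, yb_sorted u v hu hv]
  congr 2
  refine Eq.trans (MvPolynomial.aeval_X _ _) ?_
  change genericMinor k m n 2 {u 0, u 1} {v 0, v 1} _ _ = _
  rw [genericMinor, bl]
  simp only [emb_pair u hu, emb_pair v hv]

lemma bl_ne (u : Fin 2 → Fin m) (v : Fin 2 → Fin n) (h : yb k u v ≠ 0) : bl k u v ≠ 0 := by
  have h1 : u 0 ≠ u 1 ∧ v 0 ≠ v 1 := by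
    by_contra h1; apply h; unfold yb; rw [dif_neg h1]
  intro h0
  have := congrArg (MvPolynomial.eval fun p : Fin m × Fin n =>
    if p = (u 0, v 0) ∨ p = (u 1, v 1) then (1 : k) else 0) h0
  simp [bl, Matrix.det_fin_two, h1.1, h1.1.symm, h1.2, h1.2.symm] at this

noncomputable def Ys (k : Type*) [Field k] (r : Pos → Fin m) (c : Pos → Fin n) :
    MvPolynomial (MinorIndex 2 m n) k :=
  ∏ a, yb k (fun i => r (a, i)) (fun i => c (a, i))

noncomputable def Xs (k : Type*) [Field k] (r : Pos → Fin m) (c : Pos → Fin n) :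
    MvPolynomial (Fin m × Fin n) k :=
  ∏ p : Pos, MvPolynomial.X (r p, c p)

lemma prod_usmul {A ι : Type*} [CommRing A] (s : Finset ι) (z : ι → ℤˣ) (f : ι → A) :
    ∏ i ∈ s, z i • f i = (∏ i ∈ s, z i) • ∏ i ∈ s, f i := by
  simp only [usmul_eq, zsmul_eq_mul, Finset.prod_mul_distrib]
  push_cast
  rfl

lemma Xs_act (r : Pos → Fin m) (c : Pos → Fin n) (g : G) :
    Xs k (act r g) (act c g) = Xs k r c :=
  Equiv.prod_comp g (fun p => (MvPolynomial.X (r p, c p) : MvPolynomial (Fin m × Fin n) k))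

lemma pi_Ys (r : Pos → Fin m) (c : Pos → Fin n) :
    minorPresentation k 2 m n (Ys k r c) = ∑ ε : Eg, sg ε • Xs k (act r (fl ε)) c := by
  rw [Ys, map_prod]
  simp only [pi_yb, bl, Matrix.det_apply]
  rw [Finset.prod_univ_sum, Fintype.piFinset_univ]
  refine Finset.sum_congr rfl fun ε _ => ?_
  rw [prod_usmul]
  congr 1
  rw [Xs, Fintype.prod_prod_type]
  rfl

lemma sg_def (ε : Eg) : sg ε = ∏ a, Equiv.Perm.sign (ε a) := rfl

lemma Ys_r (r : Pos → Fin m) (c : Pos → Fin n) (ε : Eg) :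
    Ys k (act r (fl ε)) c = sg ε • Ys k r c := by
  rw [Ys, Ys, sg_def, ← prod_usmul]
  exact Finset.prod_congr rfl fun a _ => yb_r (fun i => r (a, i)) _ (ε a)

lemma Ys_c (r : Pos → Fin m) (c : Pos → Fin n) (ε : Eg) :
    Ys k r (act c (fl ε)) = sg ε • Ys k r c := by
  rw [Ys, Ys, sg_def, ← prod_usmul]
  exact Finset.prod_congr rfl fun a _ => yb_c _ (fun i => c (a, i)) (ε a)

lemma Ys_w (r : Pos → Fin m) (c : Pos → Fin n) (w : Equiv.Perm (Fin 4)) :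
    Ys k (act r (bw w)) (act c (bw w)) = Ys k r c :=
  Equiv.prod_comp w (fun a => yb k (fun i => r (a, i)) (fun i => c (a, i)))

lemma DD_bal {U W A : Type*} [AddCommGroup A] (Z : (Pos → U) → (Pos → W) → A)
    (hZ : ∀ r c g, Z (act r g) (act c g) = Z r c) (g : G) (r : Pos → U) (c : Pos → W) :
    DD (fun r c => ∑ ε : Eg, sg ε • Z (act r (fl ε)) c) g r c = 0 := by
  rw [DD, sub_eq_zero, LL, LL]
  simp only [sw, act_act, Finset.smul_sum]
  rw [Finset.sum_comm]
  refine Fintype.sum_equiv (Equiv.inv Eg) _ _ fun ε => ?_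
  refine Finset.sum_congr rfl fun δ _ => ?_
  rw [smul_comm, Equiv.inv_apply, sg_inv]
  congr 2
  rw [← hZ (act r (fl δ)) _ (g * fl ε), act_act, act_act]
  have h1 : fl ε⁻¹ * g⁻¹ * (g * fl ε) = 1 := by rw [map_inv]; group
  rw [h1, act_one, mul_assoc]

lemma map_DD {U W A B F : Type*} [AddCommGroup A] [AddCommGroup B] [FunLike F A B]
    [AddMonoidHomClass F A B] (f : F) (Z : (Pos → U) → (Pos → W) → A) (g : G)
    (r : Pos → U) (c : Pos → W) : f (DD Z g r c) = DD (fun r c => f (Z r c)) g r c := by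
  rw [DD, DD, LL, LL, LL, LL, map_sub, map_sum, map_sum]
  simp only [map_usmul, sw]

lemma pi_DD (g : G) (r : Pos → Fin m) (c : Pos → Fin n) :
    minorPresentation k 2 m n (DD (Ys k) g r c) = 0 := by
  rw [map_DD]
  have h : (fun (r : Pos → Fin m) (c : Pos → Fin n) => minorPresentation k 2 m n (Ys k r c))
      = fun r c => ∑ ε : Eg, sg ε • Xs k (act r (fl ε)) c := by
    funext r c; exact pi_Ys r c
  rw [h]
  exact DD_bal (Xs k) Xs_act g r c

end conc
end QM

namespace QM
open Equiv Finset

section fin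
variable {k : Type*} [Field k] {m n : ℕ}

noncomputable def Rst (k : Type*) [Field k] (a : Fin 4) (r : Pos → Fin m) (c : Pos → Fin n) :
    MvPolynomial (MinorIndex 2 m n) k :=
  ∏ b ∈ Finset.univ.erase a, yb k (fun i => r (b, i)) (fun i => c (b, i))

lemma Ys_split (a : Fin 4) (r : Pos → Fin m) (c : Pos → Fin n) :
    Ys k r c = yb k (fun i => r (a, i)) (fun i => c (a, i)) * Rst k a r c :=
  (Finset.mul_prod_erase Finset.univ _ (Finset.mem_univ a)).symm

lemma yb_deg (u : Fin 2 → Fin m) (v : Fin 2 → Fin n) : (yb k u v).totalDegree ≤ 1 := by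
  unfold yb
  split_ifs with h
  · rcases Int.units_eq_one_or (sn u * sn v) with h1 | h1 <;> rw [h1]
    · rw [one_smul]; exact (MvPolynomial.totalDegree_X _).le
    · rw [Units.neg_smul, one_smul, MvPolynomial.totalDegree_neg]; exact (MvPolynomial.totalDegree_X _).le
  · simp

lemma Rst_deg (a : Fin 4) (r : Pos → Fin m) (c : Pos → Fin n) :
    Rst k a r c ∈ MvPolynomial.restrictTotalDegree (MinorIndex 2 m n) k 3 := by
  rw [MvPolynomial.mem_restrictTotalDegree]
  refine (MvPolynomial.totalDegree_finsetProd _ _).trans ?_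
  refine (Finset.sum_le_sum fun b _ => yb_deg _ _).trans ?_
  simp

noncomputable def rho (k : Type*) [Field k] (a : Fin 4) (g : G) (r : Pos → Fin m)
    (c : Pos → Fin n) : MvPolynomial (MinorIndex 2 m n) k :=
  ∑ ε : Eg, sg ε • Equiv.Perm.sign (ε a) • Rst k a (act r (fl ε * g)) c -
  ∑ ε : Eg, sg ε • Equiv.Perm.sign (ε a) • Rst k a r (act c (fl ε * g⁻¹))

lemma usmul_mem {A : Type*} [AddCommGroup A] [Module k A] (N : Submodule k A) (z : ℤˣ) {x : A}
    (hx : x ∈ N) : z • x ∈ N := by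
  rw [usmul_eq]; exact zsmul_mem hx _

lemma rho_deg (a : Fin 4) (g : G) (r : Pos → Fin m) (c : Pos → Fin n) :
    (rho k a g r c).totalDegree ≤ 3 := by
  rw [← MvPolynomial.mem_restrictTotalDegree]
  unfold rho
  refine Submodule.sub_mem _ (Submodule.sum_mem _ fun ε _ => ?_) (Submodule.sum_mem _ fun ε _ => ?_)
  · exact usmul_mem _ _ (usmul_mem _ _ (Rst_deg _ _ _))
  · exact usmul_mem _ _ (usmul_mem _ _ (Rst_deg _ _ _))

lemma DD_fac (a : Fin 4) (g : G) (hg : ∀ i, g (a, i) = (a, i)) (r : Pos → Fin m)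
    (c : Pos → Fin n) :
    DD (Ys k) g r c = yb k (fun i => r (a, i)) (fun i => c (a, i)) * rho k a g r c := by
  have hg' : ∀ i, g⁻¹ (a, i) = (a, i) := fun i => by
    rw [Equiv.Perm.inv_eq_iff_eq, hg]
  have e1 : ∀ ε : Eg, Ys k (act r (fl ε * g)) c = yb k (fun i => r (a, i)) (fun i => c (a, i)) *
      Equiv.Perm.sign (ε a) • Rst k a (act r (fl ε * g)) c := by
    intro ε
    rw [Ys_split a, mul_smul_comm, ← smul_mul_assoc, ← yb_r]
    congr 2
    funext i
    simp only [act, Equiv.Perm.mul_apply, hg, fl_apply]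
  have e2 : ∀ ε : Eg, Ys k r (act c (fl ε * g⁻¹)) = yb k (fun i => r (a, i)) (fun i => c (a, i)) *
      Equiv.Perm.sign (ε a) • Rst k a r (act c (fl ε * g⁻¹)) := by
    intro ε
    rw [Ys_split a, mul_smul_comm, ← smul_mul_assoc, ← yb_c]
    congr 2
    funext i
    simp only [act, Equiv.Perm.mul_apply, hg', fl_apply]
  unfold DD LL rho
  simp only [sw, e1, e2, mul_sub, Finset.mul_sum, mul_smul_comm]

noncomputable abbrev I3 (k : Type*) [Field k] (m n : ℕ) : Ideal (MvPolynomial (MinorIndex 2 m n) k) :=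
  Ideal.span {x | x ∈ minorRelations k 2 m n ∧ x.totalDegree ≤ 3}

lemma DD_mem (a : Fin 4) (g : G) (hg : ∀ i, g (a, i) = (a, i)) (r : Pos → Fin m)
    (c : Pos → Fin n) : DD (Ys k) g r c ∈ I3 k m n := by
  have h := pi_DD (k := k) g r c
  rw [DD_fac a g hg] at h ⊢
  by_cases hy : yb k (fun i => r (a, i)) (fun i => c (a, i)) = 0
  · rw [hy, zero_mul]; exact Ideal.zero_mem _
  · rw [map_mul, pi_yb] at h
    refine Ideal.mul_mem_left _ _ (Ideal.subset_span ⟨?_, rho_deg _ _ _ _⟩)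
    exact (mul_eq_zero.1 h).resolve_left (bl_ne _ _ hy)

noncomputable def Yq (k : Type*) [Field k] (r : Pos → Fin m) (c : Pos → Fin n) :
    MvPolynomial (MinorIndex 2 m n) k ⧸ I3 k m n :=
  Ideal.Quotient.mk _ (Ys k r c)

lemma good_Yq [CharZero k] : Good (Yq k : (Pos → Fin m) → (Pos → Fin n) → _) where
  hr r c ε := by rw [Yq, Ys_r, map_usmul]; rfl
  hc r c ε := by rw [Yq, Ys_c, map_usmul]; rfl
  hw r c w := by rw [Yq, Ys_w]; rfl
  hK g a hg r c := by
    have := map_DD (Ideal.Quotient.mk (I3 k m n)) (Ys k) g r c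
    rw [Ideal.Quotient.eq_zero_iff_mem.2 (DD_mem a g hg r c)] at this
    exact this.symm
  h2 N q hN h := by
    rw [← Nat.cast_smul_eq_nsmul k] at h
    exact (smul_eq_zero.1 h).resolve_left (by exact_mod_cast hN)

noncomputable def dg (r : Pos → Fin m) (c : Pos → Fin n) : (Fin m × Fin n) →₀ ℕ :=
  ∑ p : Pos, Finsupp.single (r p, c p) 1

lemma Xs_eq (r : Pos → Fin m) (c : Pos → Fin n) :
    Xs k r c = MvPolynomial.monomial (dg r c) 1 := by
  rw [dg, MvPolynomial.monomial_sum_one]; rfl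

lemma dg_perm (r r' : Pos → Fin m) (c c' : Pos → Fin n) (h : dg r c = dg r' c') :
    ∃ g : G, r = act r' g ∧ c = act c' g := by
  have h1 : ∀ x, Nonempty ({p : Pos // (r p, c p) = x} ≃ {p : Pos // (r' p, c' p) = x}) := by
    intro x
    rw [← Fintype.card_eq, Fintype.card_subtype, Fintype.card_subtype]
    have := DFunLike.congr_fun h x
    simpa [dg, Finsupp.finsetSum_apply, Finsupp.single_apply, Finset.sum_boole] using this
  let e := fun x => (h1 x).some
  let g : G := Equiv.ofFiberEquiv (f := fun p => (r p, c p)) (g := fun p => (r' p, c' p)) e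
  have hg : ∀ p, (r' (g p), c' (g p)) = (r p, c p) := fun p =>
    Equiv.ofFiberEquiv_map (f := fun p => (r p, c p)) (g := fun p => (r' p, c' p)) e p
  refine ⟨g, funext fun p => ?_, funext fun p => ?_⟩
  · exact (congrArg Prod.fst (hg p)).symm
  · exact (congrArg Prod.snd (hg p)).symm

lemma exists_hat {Q : Type*} [AddCommGroup Q] [Module k Q] (s : (Pos → Fin m) → (Pos → Fin n) → Q)
    (hs : ∀ r c (q : G), s (act r q) (act c q) = s r c) :
    ∃ L : MvPolynomial (Fin m × Fin n) k →ₗ[k] Q, ∀ r c, L (Xs k r c) = s r c := by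
  classical
  let F : ((Fin m × Fin n) →₀ ℕ) → Q := fun d =>
    if h : ∃ rc : (Pos → Fin m) × (Pos → Fin n), dg rc.1 rc.2 = d then s h.choose.1 h.choose.2 else 0
  refine ⟨(MvPolynomial.basisMonomials (Fin m × Fin n) k).constr k F, fun r c => ?_⟩
  have h0 : Xs k r c = MvPolynomial.basisMonomials (Fin m × Fin n) k (dg r c) := by
    rw [Xs_eq, MvPolynomial.coe_basisMonomials]
  rw [h0, Module.Basis.constr_basis]
  have h : ∃ rc : (Pos → Fin m) × (Pos → Fin n), dg rc.1 rc.2 = dg r c := ⟨(r, c), rfl⟩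
  simp only [F]
  rw [dif_pos h]
  obtain ⟨g, h1, h2⟩ := dg_perm _ _ _ _ h.choose_spec
  rw [h1, h2, hs]

lemma exists_sum_single {σ : Type*} : ∀ (N : ℕ) (d : σ →₀ ℕ), d.degree = N →
    ∃ v : Fin N → σ, d = ∑ a, Finsupp.single (v a) 1
  | 0, d, h => ⟨Fin.elim0, by simpa using (Finsupp.degree_eq_zero_iff d).1 h⟩
  | N + 1, d, h => by
    classical
    have hd : d ≠ 0 := by rintro rfl; simp at h
    obtain ⟨i, hi⟩ := Finsupp.support_nonempty_iff.2 hd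
    have hle : Finsupp.single i 1 ≤ d := by
      rw [Finsupp.single_le_iff]
      exact Nat.one_le_iff_ne_zero.2 (Finsupp.mem_support_iff.1 hi)
    have hd' : d = Finsupp.single i 1 + (d - Finsupp.single i 1) := (add_tsub_cancel_of_le hle).symm
    obtain ⟨v, hv⟩ := exists_sum_single N (d - Finsupp.single i 1) (by
      have := congrArg Finsupp.degree hd'
      rw [map_add, Finsupp.degree_single, h] at this
      omega)
    refine ⟨Fin.cons i v, ?_⟩
    rw [Fin.sum_univ_succ, Fin.cons_zero]
    simp only [Fin.cons_succ]
    rw [← hv]; exact hd'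

lemma exists_pair {l : ℕ} (I : Finset (Fin l)) (hI : I.card = 2) :
    ∃ u : Fin 2 → Fin l, u 0 < u 1 ∧ I = {u 0, u 1} := by
  refine ⟨I.orderEmbOfFin hI, (I.orderEmbOfFin hI).strictMono (by decide), ?_⟩
  have h := Finset.image_orderEmbOfFin_univ I hI
  ext x
  have h2 := Finset.ext_iff.1 h x
  rw [← h2, Finset.mem_image]
  simp [Fin.exists_fin_two, eq_comm]

lemma exists_yb (v : MinorIndex 2 m n) : ∃ (u : Fin 2 → Fin m) (w : Fin 2 → Fin n),
    yb k u w = MvPolynomial.X v := by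
  obtain ⟨⟨I, J⟩, hI, hJ⟩ := v
  obtain ⟨u, hu, rfl⟩ := exists_pair I hI
  obtain ⟨w, hw, rfl⟩ := exists_pair J hJ
  exact ⟨u, w, yb_sorted u w hu hw⟩

lemma mono_eq (d : MinorIndex 2 m n →₀ ℕ) (hd : d.degree = 4) :
    ∃ (r : Pos → Fin m) (c : Pos → Fin n), MvPolynomial.monomial d (1 : k) = Ys k r c := by
  obtain ⟨v, rfl⟩ := exists_sum_single 4 d hd
  choose u w h using fun a => exists_yb (k := k) (v a)
  refine ⟨fun p => u p.1 p.2, fun p => w p.1 p.2, ?_⟩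
  rw [MvPolynomial.monomial_sum_one]
  exact Finset.prod_congr rfl fun a _ => (h a).symm

theorem main [CharZero k] (f : MvPolynomial (MinorIndex 2 m n) k)
    (hf : f ∈ minorRelations k 2 m n) (h4 : f.IsHomogeneous 4) : f ∈ I3 k m n := by
  obtain ⟨s, hs, hsY⟩ := (good_Yq (k := k) (m := m) (n := n)).exists_s (k := k)
  obtain ⟨L, hL⟩ := exists_hat (k := k) s hs
  have key : ∀ d : MinorIndex 2 m n →₀ ℕ, d.degree = 4 →
      L (minorPresentation k 2 m n (MvPolynomial.monomial d 1)) =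
        Ideal.Quotient.mkₐ k (I3 k m n) (MvPolynomial.monomial d 1) := by
    intro d hd
    obtain ⟨r, c, h⟩ := mono_eq (k := k) d hd
    rw [h, pi_Ys, map_sum]
    simp only [map_usmul, hL]
    exact hsY r c
  have hf0 : minorPresentation k 2 m n f = 0 := hf
  have h1 : L (minorPresentation k 2 m n f) = Ideal.Quotient.mkₐ k (I3 k m n) f := by
    rw [MvPolynomial.as_sum f]
    simp only [map_sum]
    refine Finset.sum_congr rfl fun d hd => ?_
    have h2 : d.degree = 4 := by
      rw [← h4 (MvPolynomial.mem_support_iff.1 hd)]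
      rw [Finsupp.degree_eq_weight_one]; rfl
    have h3 : MvPolynomial.monomial d (f.coeff d) = f.coeff d • MvPolynomial.monomial d (1 : k) := by
      rw [MvPolynomial.smul_monomial, smul_eq_mul, mul_one]
    rw [h3, map_smul, map_smul, map_smul, key d h2]
  rw [hf0, map_zero] at h1
  exact Ideal.Quotient.eq_zero_iff_mem.1 h1.symm

end fin
end QM

/-- The ideal of relations among the 2-minors of a generic `m × n` matrix has no minimal
generators of degree 4: every homogeneous element of degree 4 of `J_2(m,n)` lies in the
ideal generated by the elements of `J_2(m,n)` of degree at most 3. -/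
theorem minorRelations_no_quartic_minimal_generator (k : Type*) [Field k] [CharZero k]
    (m n : ℕ) (hm : 2 ≤ m) (hmn : m ≤ n) :
    ∀ f : MvPolynomial (MinorIndex 2 m n) k,
      f ∈ minorRelations k 2 m n → f.IsHomogeneous 4 →
      f ∈ Ideal.span {x | x ∈ minorRelations k 2 m n ∧ x.totalDegree ≤ 3} := by
  exact fun f hf h4 => QM.main f hf h4
end
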